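/- arXiv:2209.10659 — 6 statements merged into one kernel-verified Lean document; each statement's English description precedes it below -/
import Mathlib

section
/- Let k be a number field and G a finite abelian group. Then the rational number ϱ(k,G) := Σ_{g ∈ G, g ≠ 1} (ord g)/[k(μ_{ord g}) : k] is a non-negative integer (and it is positive when G is non-trivial). -/
/-!
The elements of order `d` of a finite group split into classes according to the cyclic subgroup
they generate, and each class has `φ(d)` elements; so `φ(d)` divides their number. On the other
hand `Gal(k(μ_d)/k)` embeds into `(ℤ/m)ˣ`, where `m ∣ d` is the number of `d`-th roots of unity,
so `[k(μ_d) : k]` divides `φ(m)`, hence `φ(d)`. Therefore the elements of order `d` contribute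
an integer to the sum, for every `d`.
-/

open Finset Module

open scoped Nat

section GroupTheory

variable {G : Type*} [Group G] [Fintype G]

theorem card_filter_zpowers_eq_zpowers (g : G)
    [DecidablePred fun h : G ↦ Subgroup.zpowers h = Subgroup.zpowers g] :
    #{h : G | Subgroup.zpowers h = Subgroup.zpowers g} = φ (orderOf g) := by
  classical
  have card_zpowers : Fintype.card (Subgroup.zpowers g) = orderOf g := Fintype.card_zpowers
  rw [← IsCyclic.card_orderOf_eq_totient (α := Subgroup.zpowers g) card_zpowers.symm.dvd]
  symm
  refine card_bij (fun h _ ↦ (h : G)) (fun h h_order ↦ ?_) (fun _ _ _ _ ↦ Subtype.ext)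
    fun h h_generates ↦ ?_
  · simp only [mem_filter_univ] at h_order ⊢
    refine Subgroup.eq_of_le_of_card_ge (Subgroup.zpowers_le_of_mem h.2) ?_
    rw [Nat.card_zpowers, Nat.card_zpowers, Subgroup.orderOf_coe, h_order]
  · simp only [mem_filter_univ] at h_generates
    refine ⟨⟨h, h_generates ▸ Subgroup.mem_zpowers h⟩, ?_, rfl⟩
    rw [mem_filter_univ, Subgroup.orderOf_mk, ← Nat.card_zpowers, h_generates, Nat.card_zpowers]

theorem totient_dvd_card_filter_orderOf_eq (d : ℕ) : φ d ∣ #{g : G | orderOf g = d} := by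
  classical
  rw [card_eq_sum_card_image Subgroup.zpowers]
  refine dvd_sum fun H hH ↦ ?_
  obtain ⟨g, hg, rfl⟩ := mem_image.mp hH
  rw [mem_filter_univ] at hg
  have same_order {h : G} (h_eq : Subgroup.zpowers h = Subgroup.zpowers g) : orderOf h = d := by
    rw [← hg, ← Nat.card_zpowers, h_eq, Nat.card_zpowers]
  rw [filter_filter, filter_congr fun h _ ↦ and_iff_right_of_imp same_order,
    card_filter_zpowers_eq_zpowers, hg]

theorem sum_orderOf_mem_of_totient_nsmul_mem {M : Type*} [AddCommMonoid M] (S : AddSubmonoid M)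
    (p : ℕ → Prop) [DecidablePred p] (f : ℕ → M)
    (hf : ∀ g : G, p (orderOf g) → φ (orderOf g) • f (orderOf g) ∈ S) :
    ∑ g : G with p (orderOf g), f (orderOf g) ∈ S := by
  rw [sum_comp f orderOf]
  refine S.sum_mem fun d hd ↦ ?_
  obtain ⟨g, hg, rfl⟩ := mem_image.mp hd
  rw [mem_filter_univ] at hg
  obtain ⟨c, hc⟩ := totient_dvd_card_filter_orderOf_eq (G := G) (orderOf g)
  rw [filter_filter, filter_congr fun h _ ↦ and_iff_right_of_imp fun h_eq ↦ h_eq ▸ hg, hc,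
    mul_nsmul]
  exact S.nsmul_mem (hf g hg) c

end GroupTheory

section RootsOfUnity

theorem exists_isPrimitiveRoot_forall_pow_eq_one_iff (R : Type*) [CommRing R] [IsDomain R]
    (n : ℕ) [NeZero n] :
    ∃ m, m ∣ n ∧ ∃ ζ : R, IsPrimitiveRoot ζ m ∧ ∀ x : R, x ^ n = 1 ↔ x ^ m = 1 := by
  obtain ⟨ζ, hζ⟩ := IsCyclic.exists_generator (α := rootsOfUnity n R)
  have order_dvd : orderOf ζ ∣ n := orderOf_dvd_of_pow_eq_one (Subtype.ext ζ.2)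
  refine ⟨orderOf ζ, order_dvd, ζ.1, ?_, fun x ↦ ⟨fun hx ↦ ?_, fun hx ↦ ?_⟩⟩
  · rw [IsPrimitiveRoot.coe_units_iff, IsPrimitiveRoot.coe_submonoidClass_iff]
    exact IsPrimitiveRoot.orderOf ζ
  · have x_pow : rootsOfUnity.mkOfPowEq x hx ^ orderOf ζ = 1 :=
      orderOf_dvd_iff_pow_eq_one.mp (orderOf_dvd_of_mem_zpowers (hζ _))
    simpa using congr_arg (fun y : rootsOfUnity n R ↦ ((y : Rˣ) : R)) x_pow
  · obtain ⟨c, hc⟩ := order_dvd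
    rw [hc, pow_mul, hx, one_pow]

variable (K L : Type*) [Field K] [Field L] [Algebra K L] (n : ℕ)

theorem finrank_dvd_totient_of_isCyclotomicExtension [NeZero n] [IsCyclotomicExtension {n} K L] :
    finrank K L ∣ φ n := by
  have := IsCyclotomicExtension.finiteDimensional {n} K L
  have := IsCyclotomicExtension.isGalois {n} K L
  rw [← IsGalois.card_aut_eq_finrank, ← ZMod.card_units_eq_totient, ← Nat.card_eq_fintype_card]
  exact Subgroup.card_dvd_of_injective _
    ((IsCyclotomicExtension.zeta_spec n K L).autToPow_injective K)

/-- The field `K(μ_n)`, formed inside a given extension `L` of `K`: only the `n`-th roots of unity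
that lie in `L` are adjoined. For `n = 0` this is all of `L`. -/
abbrev adjoinRootsOfUnity : IntermediateField K L :=
  IntermediateField.adjoin K {x : L | x ^ n = 1}

theorem exists_dvd_isCyclotomicExtension_adjoinRootsOfUnity [NeZero n] :
    ∃ m, m ∣ n ∧ IsCyclotomicExtension {m} K (adjoinRootsOfUnity K L n) := by
  obtain ⟨m, m_dvd, ζ, hζ, pow_eq_one_iff⟩ := exists_isPrimitiveRoot_forall_pow_eq_one_iff L n
  have m_ne_zero : m ≠ 0 := ne_zero_of_dvd_ne_zero (NeZero.ne n) m_dvd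
  refine ⟨m, m_dvd, ?_⟩
  have roots_eq : {x : L | x ^ n = 1} = {x : L | ∃ d ∈ ({m} : Set ℕ), d ≠ 0 ∧ x ^ d = 1} := by
    ext x
    simp [m_ne_zero, pow_eq_one_iff]
  rw [adjoinRootsOfUnity, roots_eq]
  refine IntermediateField.isCyclotomicExtension_adjoin_of_exists_isPrimitiveRoot {m} K L ?_
  rintro _ rfl _
  exact ⟨ζ, hζ⟩

theorem finrank_adjoinRootsOfUnity_dvd_totient [NeZero n] :
    finrank K (adjoinRootsOfUnity K L n) ∣ φ n := by
  obtain ⟨m, m_dvd, _⟩ := exists_dvd_isCyclotomicExtension_adjoinRootsOfUnity K L n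
  have : NeZero m := ⟨ne_zero_of_dvd_ne_zero (NeZero.ne n) m_dvd⟩
  exact (finrank_dvd_totient_of_isCyclotomicExtension K _ m).trans (Nat.totient_dvd_of_dvd m_dvd)

theorem finrank_adjoinRootsOfUnity_pos [NeZero n] : 0 < finrank K (adjoinRootsOfUnity K L n) :=
  Nat.pos_of_dvd_of_pos (finrank_adjoinRootsOfUnity_dvd_totient K L n)
    (Nat.totient_pos.mpr (NeZero.pos n))

theorem totient_nsmul_div_finrank_adjoinRootsOfUnity_mem_mrange_natCast [NeZero n] :
    φ n • ((n : ℚ) / finrank K (adjoinRootsOfUnity K L n)) ∈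
      AddMonoidHom.mrange (Nat.castAddMonoidHom ℚ) := by
  obtain ⟨c, hc⟩ := finrank_adjoinRootsOfUnity_dvd_totient K L n
  have := (finrank_adjoinRootsOfUnity_pos K L n).ne'
  refine ⟨c * n, ?_⟩
  rw [hc, Nat.coe_castAddMonoidHom, nsmul_eq_mul]
  push_cast
  field_simp

end RootsOfUnity

theorem stmt_0_general (k L : Type*) [Field k] [Field L] [Algebra k L]
    (G : Type*) [Group G] [Fintype G] [DecidableEq G] :
    ∃ n : ℕ,
      (∑ g ∈ univ.filter (fun g : G ↦ g ≠ 1),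
          (orderOf g : ℚ) / (finrank k (adjoinRootsOfUnity k L (orderOf g)) : ℚ)) = (n : ℚ) ∧
      (Nontrivial G → 0 < n) := by
  have orderOf_neZero (g : G) : NeZero (orderOf g) := ⟨(orderOf_pos g).ne'⟩
  obtain ⟨n, hn⟩ := sum_orderOf_mem_of_totient_nsmul_mem (G := G) _ (· ≠ 1)
    (fun d ↦ (d : ℚ) / finrank k (adjoinRootsOfUnity k L d)) fun g _ ↦
      totient_nsmul_div_finrank_adjoinRootsOfUnity_mem_mrange_natCast k L (orderOf g)
  simp only [ne_eq, orderOf_eq_one_iff, Nat.coe_castAddMonoidHom] at hn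
  refine ⟨n, hn.symm, fun _ ↦ ?_⟩
  obtain ⟨g, hg⟩ := exists_ne (1 : G)
  rw [← Nat.cast_pos (α := ℚ), hn]
  exact sum_pos
    (fun h _ ↦ div_pos (Nat.cast_pos.mpr (orderOf_pos h))
      (Nat.cast_pos.mpr (finrank_adjoinRootsOfUnity_pos k L _)))
    ⟨g, (mem_filter_univ g).mpr hg⟩

/-- For a number field `k` and a finite abelian group `G`, the quantity
`ϱ(k,G) = ∑_{g ∈ G, g ≠ 1} (ord g)/[k(μ_{ord g}) : k]` is a non-negative integer, positive
when `G` is non-trivial. Here `k(μ_n)` is the subfield of a fixed algebraic closure of `k`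
obtained by adjoining all `n`-th roots of unity. -/
theorem stmt_0 (k : Type*) [Field k] [NumberField k]
    (G : Type*) [CommGroup G] [Fintype G] [DecidableEq G] :
    ∃ n : ℕ,
      (∑ g ∈ Finset.univ.filter (fun g : G => g ≠ 1),
          (orderOf g : ℚ) /
            (Module.finrank k
              ↥(IntermediateField.adjoin k
                  {x : AlgebraicClosure k | x ^ (orderOf g) = 1}) : ℚ)) = (n : ℚ) ∧
      (Nontrivial G → 0 < n) :=
  stmt_0_general k (AlgebraicClosure k) G
end

section
/- Let k be a number field with a fixed algebraic closure k̄, let 𝒜 ⊆ k^× be a finitely generated subgroup, and for d ≥ 1 let k_d = k(μ_d, √[d]{𝒜}) ⊆ k̄. Let G be a non-trivial finite abelian group and let H be a proper subgroup of G. Then ϱ(k,H,𝒜) < ϱ(k,G,𝒜), where ϱ(k,G,𝒜) := Σ_{g ∈ G, g ≠ 1} (ord g)/[k_{ord g} : k]. -/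
/-- The field `k_d = k(μ_d, √[d]{𝒜})`: the subfield of a fixed algebraic closure of `k`
obtained by adjoining all `d`-th roots of unity and all `d`-th roots of all elements of the
subgroup `𝒜 ⊆ k^×`. -/
noncomputable def adjoinRootsOfSubgroup (k : Type*) [Field k] (𝒜 : Subgroup kˣ) (d : ℕ) :
    IntermediateField k (AlgebraicClosure k) :=
  IntermediateField.adjoin k
    ({x : AlgebraicClosure k | x ^ d = 1} ∪
      {x : AlgebraicClosure k | ∃ a ∈ 𝒜, x ^ d = algebraMap k (AlgebraicClosure k) (a : k)})

/-!
The `d`-th roots of `a` differ by `d`-th roots of unity, so a field containing `μ_d` contains all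
`d`-th roots of `a` as soon as it contains one. The elements with a root in such a field form a
group; hence `k_d` is generated by `μ_d` and the roots of finitely many generators of `𝒜`, and
`[k_d : k]` is finite. Thus every term of `ϱ(k,G,𝒜)` is strictly positive, and an element outside
`H` contributes a term of `ϱ(k,G,𝒜)` that is missing from `ϱ(k,H,𝒜)`.
-/

theorem finite_setOf_pow_eq {R : Type*} [CommRing R] [IsDomain R] {d : ℕ} (hd : d ≠ 0) (c : R) :
    {x : R | x ^ d = c}.Finite :=
  (Polynomial.nthRootsFinset d c).finite_toSet.subset fun _ hx ↦
    (Polynomial.mem_nthRootsFinset (Nat.pos_of_ne_zero hd) c).2 hx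

theorem mem_of_pow_eq_pow_of_forall_pow_eq_one_mem {K C : Type*} [Field K] [SetLike C K]
    [SubfieldClass C K] {F : C} {d : ℕ} (hF : ∀ ζ : K, ζ ^ d = 1 → ζ ∈ F) {x y : K}
    (hy₀ : y ≠ 0) (hy : y ∈ F) (hxy : x ^ d = y ^ d) : x ∈ F := by
  have hζ : (x / y) ^ d = 1 := by
    rw [div_pow, hxy, div_self (pow_ne_zero d hy₀)]
  simpa only [div_mul_cancel₀ x hy₀] using mul_mem (hF _ hζ) hy

theorem exists_mem_pow_eq_algebraMap_of_mem_closure {k K C : Type*} [Field k] [Field K]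
    [Algebra k K] [SetLike C K] [SubfieldClass C K] (F : C) {d : ℕ} {S : Set kˣ}
    (hS : ∀ a ∈ S, ∃ y ∈ F, y ^ d = algebraMap k K (a : k)) {a : kˣ}
    (ha : a ∈ Subgroup.closure S) : ∃ y ∈ F, y ^ d = algebraMap k K (a : k) := by
  induction ha using Subgroup.closure_induction with
  | mem a ha => exact hS a ha
  | one => exact ⟨1, one_mem F, by simp⟩
  | mul a b _ _ iha ihb =>
    obtain ⟨y, hy, hya⟩ := iha
    obtain ⟨z, hz, hzb⟩ := ihb
    exact ⟨y * z, mul_mem hy hz, by rw [mul_pow, hya, hzb, Units.val_mul, map_mul]⟩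
  | inv a _ iha =>
    obtain ⟨y, hy, hya⟩ := iha
    exact ⟨y⁻¹, inv_mem hy, by rw [inv_pow, hya, Units.val_inv_eq_inv_val, map_inv₀]⟩

section AdjoinRoots

variable {k : Type*} [Field k] {d : ℕ}

theorem adjoinRootsOfSubgroup_closure (hd : d ≠ 0) (S : Set kˣ) :
    adjoinRootsOfSubgroup k (Subgroup.closure S) d =
      IntermediateField.adjoin k ({x : AlgebraicClosure k | x ^ d = 1} ∪
        ⋃ a ∈ S, {x | x ^ d = algebraMap k (AlgebraicClosure k) (a : k)}) := by
  apply le_antisymm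
  · set F := IntermediateField.adjoin k ({x : AlgebraicClosure k | x ^ d = 1} ∪
      ⋃ a ∈ S, {x | x ^ d = algebraMap k (AlgebraicClosure k) (a : k)})
    have unity_mem : ∀ ζ : AlgebraicClosure k, ζ ^ d = 1 → ζ ∈ F := fun ζ hζ ↦
      IntermediateField.subset_adjoin _ _ (.inl hζ)
    have exists_root : ∀ a ∈ S, ∃ y ∈ F, y ^ d = algebraMap k (AlgebraicClosure k) (a : k) := by
      intro a ha
      obtain ⟨y, hy⟩ := IsAlgClosed.exists_pow_nat_eq
        (algebraMap k (AlgebraicClosure k) (a : k)) (Nat.pos_of_ne_zero hd)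
      exact ⟨y, IntermediateField.subset_adjoin _ _ (.inr (Set.mem_biUnion ha hy)), hy⟩
    refine IntermediateField.adjoin_le_iff.2 (Set.union_subset unity_mem ?_)
    rintro x ⟨a, ha, hx⟩
    obtain ⟨y, hyF, hy⟩ := exists_mem_pow_eq_algebraMap_of_mem_closure F exists_root ha
    have hy₀ : y ≠ 0 := ne_zero_pow hd (by simp [hy])
    exact mem_of_pow_eq_pow_of_forall_pow_eq_one_mem unity_mem hy₀ hyF (hx.trans hy.symm)
  · refine IntermediateField.adjoin.mono _ _ _ (Set.union_subset_union_right _ ?_)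
    exact Set.iUnion₂_subset fun a ha x hx ↦ ⟨a, Subgroup.subset_closure ha, hx⟩

theorem finiteDimensional_adjoinRootsOfSubgroup {𝒜 : Subgroup kˣ} (h𝒜 : 𝒜.FG) (hd : d ≠ 0) :
    FiniteDimensional k (adjoinRootsOfSubgroup k 𝒜 d) := by
  obtain ⟨S, rfl⟩ := h𝒜
  rw [adjoinRootsOfSubgroup_closure hd]
  have : Finite ↥({x : AlgebraicClosure k | x ^ d = 1} ∪
      ⋃ a ∈ (S : Set kˣ), {x | x ^ d = algebraMap k (AlgebraicClosure k) (a : k)}) :=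
    (finite_setOf_pow_eq hd 1).union
      (S.finite_toSet.biUnion fun a _ ↦ finite_setOf_pow_eq hd _)
  exact IntermediateField.finiteDimensional_adjoin fun x _ ↦ Algebra.IsIntegral.isIntegral x

theorem div_finrank_adjoinRootsOfSubgroup_pos {𝒜 : Subgroup kˣ} (h𝒜 : 𝒜.FG) (hd : d ≠ 0) :
    (0 : ℚ) < d / Module.finrank k (adjoinRootsOfSubgroup k 𝒜 d) := by
  have := finiteDimensional_adjoinRootsOfSubgroup h𝒜 hd
  exact div_pos (Nat.cast_pos.2 (Nat.pos_of_ne_zero hd)) (Nat.cast_pos.2 Module.finrank_pos)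

end AdjoinRoots

theorem sum_mem_and_ne_one_lt_sum_ne_one {G M : Type*} [Group G] [Fintype G] [DecidableEq G]
    [AddCommMonoid M] [PartialOrder M] [IsOrderedCancelAddMonoid M]
    {H : Subgroup G} [DecidablePred (· ∈ H)] (hH : H ≠ ⊤) {f : G → M}
    (hf : ∀ g ≠ 1, 0 < f g) :
    ∑ g with g ∈ H ∧ g ≠ 1, f g < ∑ g with g ≠ 1, f g := by
  obtain ⟨g, hg⟩ : ∃ g, g ∉ H := by
    simpa only [ne_eq, Subgroup.eq_top_iff', not_forall] using hH
  have hg₁ : g ≠ 1 := (ne_of_mem_of_not_mem H.one_mem hg).symm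
  exact Finset.sum_lt_sum_of_subset (Finset.monotone_filter_right _ fun _ _ h ↦ h.2)
    (by simpa using hg₁) (by simp [hg]) (hf g hg₁)
    fun x hx _ ↦ (hf x (Finset.mem_filter.1 hx).2).le

theorem stmt_1_general (k : Type*) [Field k]
    (𝒜 : Subgroup kˣ) (h𝒜 : 𝒜.FG)
    (G : Type*) [Group G] [Fintype G] [DecidableEq G]
    (H : Subgroup G) [DecidablePred (· ∈ H)] (hH : H ≠ ⊤) :
    (∑ g ∈ Finset.univ.filter (fun g : G => g ∈ H ∧ g ≠ 1),
        (orderOf g : ℚ) /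
          (Module.finrank k ↥(adjoinRootsOfSubgroup k 𝒜 (orderOf g)) : ℚ))
      <
    (∑ g ∈ Finset.univ.filter (fun g : G => g ≠ 1),
        (orderOf g : ℚ) /
          (Module.finrank k ↥(adjoinRootsOfSubgroup k 𝒜 (orderOf g)) : ℚ)) :=
  sum_mem_and_ne_one_lt_sum_ne_one hH fun g _ ↦
    div_finrank_adjoinRootsOfSubgroup_pos h𝒜 (orderOf_pos g).ne'

/-- Let `k` be a number field, `𝒜 ⊆ k^×` a finitely generated subgroup,
`G` a non-trivial finite abelian group and `H` a proper subgroup of `G`. Then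
`ϱ(k,H,𝒜) < ϱ(k,G,𝒜)`, where `ϱ(k,G,𝒜) = ∑_{g ∈ G, g ≠ 1} (ord g)/[k_{ord g} : k]` and
`k_d = k(μ_d, √[d]{𝒜})`. -/
theorem stmt_1 (k : Type*) [Field k] [NumberField k]
    (𝒜 : Subgroup kˣ) (h𝒜 : 𝒜.FG)
    (G : Type*) [CommGroup G] [Fintype G] [DecidableEq G] [Nontrivial G]
    (H : Subgroup G) [DecidablePred (· ∈ H)] (hH : H ≠ ⊤) :
    (∑ g ∈ Finset.univ.filter (fun g : G => g ∈ H ∧ g ≠ 1),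
        (orderOf g : ℚ) /
          (Module.finrank k ↥(adjoinRootsOfSubgroup k 𝒜 (orderOf g)) : ℚ))
      <
    (∑ g ∈ Finset.univ.filter (fun g : G => g ≠ 1),
        (orderOf g : ℚ) /
          (Module.finrank k ↥(adjoinRootsOfSubgroup k 𝒜 (orderOf g)) : ℚ)) :=
  stmt_1_general k 𝒜 h𝒜 G H hH
end

section
/- Let K/F be a finite tamely ramified extension of p-adic fields, i.e. the residue characteristic p does not divide the ramification index e(K/F). Then every principal unit of F is the norm of a unit of K: 1 + 𝔪_F ⊆ N_{K/F}(𝒪_K^×). -/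
/-- The unit group of the ring of integers (= integral closure of `ℤ_p`) of a `p`-adic field,
viewed as a subgroup of the unit group of the field: those units that are integral with
integral inverse. -/
def integerUnits (R F : Type*) [CommRing R] [Field F] [Algebra R F] : Subgroup Fˣ where
  carrier := {x : Fˣ | IsIntegral R ((x : Fˣ) : F) ∧ IsIntegral R (((x⁻¹ : Fˣ) : F))}
  one_mem' := by
    refine ⟨by simpa using isIntegral_one, ?_⟩
    simpa using (isIntegral_one : IsIntegral R (1 : F))
  mul_mem' := by
    rintro a b ⟨ha1, ha2⟩ ⟨hb1, hb2⟩
    constructor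
    · simpa using ha1.mul hb1
    · simpa [mul_comm] using ha2.mul hb2
  inv_mem' := by
    rintro a ⟨h1, h2⟩
    exact ⟨h2, by simpa using h1⟩

/-!
The trace of `𝒪_K / 𝔪_F 𝒪_K` over `𝒪_F / 𝔪_F` is `e` times the trace of the residue field
extension, and the latter is separable; so in the tame case some `z ∈ 𝒪_K` has unit trace.
For `t ∈ 𝔪_F` one has `N(1 + tz) = 1 + Tr(z) t + O(t²)`, a polynomial in `t` with unit linear
coefficient, so Hensel's lemma solves `N(1 + tz) = x` for every principal unit `x`.
-/

open IsLocalRing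

section Hensel

open Polynomial

theorem isUnit_of_sub_mem_maximalIdeal {A : Type*} [CommRing A] [IsLocalRing A] {x y : A}
    (hy : IsUnit y) (h : x - y ∈ maximalIdeal A) : IsUnit x := by
  by_contra hx
  refine (mem_maximalIdeal y).mp ?_ hy
  simpa using Ideal.sub_mem _ ((mem_maximalIdeal x).mpr hx) h

theorem exists_eq_one_add_mul_eval {A : Type*} [CommRing A] [HenselianLocalRing A] {d : A}
    (hd : d ∈ maximalIdeal A) (H : A[X]) : ∃ s : A, s = 1 + d * s * H.eval s := by
  -- In terms of `y = s⁻¹` the equation becomes monic: `y ^ (n + 1) - y ^ n + d * H.reverse y = 0`.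
  set n := H.natDegree
  set g : A[X] := X ^ (n + 1) + (C d * H.reverse - X ^ n) with hg
  have hg_monic : g.Monic := by
    refine monic_X_pow_add ((degree_lt_iff_coeff_zero _ _).mpr fun m hm => ?_)
    have hrev : H.reverse.coeff m = 0 :=
      coeff_eq_zero_of_natDegree_lt ((reverse_natDegree_le H).trans_lt hm)
    simp [hrev, coeff_X_pow, (Nat.lt_of_succ_le hm).ne']
  have hg_eval : g.eval 1 ∈ maximalIdeal A := by
    simpa only [hg, eval_add, eval_sub, eval_mul, eval_C, eval_pow, eval_X, one_pow,
      add_sub_cancel] using Ideal.mul_mem_right _ _ hd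
  have hg_deriv : g.derivative.eval 1 - 1 ∈ maximalIdeal A := by
    have : g.derivative.eval 1 - 1 = d * H.reverse.derivative.eval 1 := by
      simp only [hg, derivative_sub, derivative_mul, derivative_X_pow_succ,
        derivative_X_pow, derivative_C, zero_mul, zero_add, map_add, map_natCast, map_one,
        eval_add, eval_sub, eval_mul, eval_pow, eval_natCast, eval_one, eval_X, eval_C, one_pow,
        mul_one]
      ring
    exact this ▸ Ideal.mul_mem_right _ _ hd
  obtain ⟨y, hy, hy_one⟩ := HenselianLocalRing.is_henselian g hg_monic 1 hg_eval
    (isUnit_of_sub_mem_maximalIdeal isUnit_one hg_deriv)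
  obtain ⟨u, rfl⟩ := isUnit_of_sub_mem_maximalIdeal isUnit_one hy_one
  have hrev : H.reverse.eval ↑u * (↑u⁻¹ : A) ^ n = H.eval ↑u⁻¹ := by
    let : Invertible (↑u⁻¹ : A) := ⟨u, u.mul_inv, u.inv_mul⟩
    exact eval₂_reverse_mul_pow (RingHom.id A) (↑u⁻¹ : A) H
  have hy : (u : A) ^ (n + 1) + (d * H.reverse.eval ↑u - u ^ n) = 0 := by
    simpa [hg] using hy.eq_zero
  have hpow : (u : A) ^ n * (↑u⁻¹ : A) ^ n = 1 := by rw [← mul_pow, u.mul_inv, one_pow]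
  refine ⟨↑u⁻¹, ?_⟩
  rw [← hrev]
  linear_combination (-(↑u⁻¹ : A) ^ (n + 1)) * hy + (↑u⁻¹ * u - ↑u⁻¹ : A) * hpow + u.mul_inv

theorem exists_eval_eq_zero_of_isUnit_eval_derivative {A : Type*} [CommRing A]
    [HenselianLocalRing A] (P : A[X]) (hP : P.eval 0 ∈ maximalIdeal A)
    (hP' : IsUnit (P.derivative.eval 0)) : ∃ t ∈ maximalIdeal A, P.eval t = 0 := by
  obtain ⟨b, hb⟩ := hP'
  obtain ⟨Q, hQ⟩ : ∃ Q : A[X], P = C (P.eval 0) + C (b : A) * X + X ^ 2 * Q := by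
    have hcoeff : P.divX.coeff 0 = b := by
      rw [hb, coeff_divX, ← coeff_zero_eq_eval_zero, coeff_derivative]; simp
    refine ⟨P.divX.divX, ?_⟩
    conv_lhs => rw [← P.divX_mul_X_add, ← P.divX.divX_mul_X_add, hcoeff, coeff_zero_eq_eval_zero]
    ring
  set c : A := P.eval 0 * ↑b⁻¹
  have hc : c ∈ maximalIdeal A := Ideal.mul_mem_right _ _ hP
  have hbc : P.eval 0 = b * c := by rw [mul_left_comm, b.mul_inv, mul_one]
  -- The first Newton approximation is `-c`, so the root is sought as `-c * s` with `s` near `1`.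
  obtain ⟨s, hs⟩ := exists_eq_one_add_mul_eval hc (C (↑b⁻¹ : A) * X * Q.comp (C (-c) * X))
  refine ⟨-c * s, Ideal.mul_mem_right _ _ (neg_mem hc), ?_⟩
  rw [hQ, hbc]
  simp only [eval_add, eval_mul, eval_pow, eval_C, eval_X, eval_comp] at hs ⊢
  linear_combination (-b * c : A) * hs - (c ^ 2 * s ^ 2 * Q.eval (-c * s)) * b.mul_inv

end Hensel

section Norm

open Polynomial

variable {A B : Type*} [CommRing A] [CommRing B] [Algebra A B] [Module.Finite A B]
  [Module.Free A B]

theorem isUnit_of_isUnit_norm {y : B} (hy : IsUnit (Algebra.norm A y)) : IsUnit y := by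
  rw [Algebra.norm_apply, ← LinearMap.isUnit_iff_isUnit_det, Module.End.isUnit_iff] at hy
  obtain ⟨w, hw⟩ := hy.surjective 1
  exact .of_mul_eq_one w hw

variable (A) in
theorem exists_norm_one_add_smul_eq_eval (z : B) :
    ∃ Q : A[X], ∀ t : A,
      Algebra.norm A (1 + t • z) = (1 + C (Algebra.trace A B z) * X + Q * X ^ 2).eval t := by
  classical
  let b := Module.Free.chooseBasis A B
  refine ⟨(1 + (X : A[X]) • (Algebra.leftMulMatrix b z).map C).det.divX.divX, fun t => ?_⟩
  rw [Algebra.norm_eq_matrix_det b, map_add, map_one, map_smul, Matrix.det_one_add_smul,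
    Algebra.trace_eq_matrix_trace b]
  simp

theorem exists_units_norm_eq_of_isUnit_trace [HenselianLocalRing A] {z : B}
    (hz : IsUnit (Algebra.trace A B z)) {x : A} (hx : x - 1 ∈ maximalIdeal A) :
    ∃ y : Bˣ, Algebra.norm A (y : B) = x := by
  obtain ⟨Q, hQ⟩ := exists_norm_one_add_smul_eq_eval A z
  obtain ⟨t, -, ht⟩ := exists_eval_eq_zero_of_isUnit_eval_derivative
    (1 + C (Algebra.trace A B z) * X + Q * X ^ 2 - C x)
    (by simpa using neg_mem hx) (by simpa using hz)
  have hnorm : Algebra.norm A (1 + t • z) = x := by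
    rwa [eval_sub, eval_C, ← hQ, sub_eq_zero] at ht
  have hunit : IsUnit (1 + t • z) :=
    isUnit_of_isUnit_norm (hnorm ▸ isUnit_of_sub_mem_maximalIdeal isUnit_one hx)
  exact ⟨hunit.unit, hnorm⟩

end Norm

section ResidueTrace

variable {k V : Type*} [Field k] [CommRing V] [IsLocalRing V] [Algebra k V] [Module.Finite k V]

variable (k V) in
theorem finrank_eq_length_mul_finrank_residueField :
    Module.finrank k V = (Module.length V V).toNat * Module.finrank k (ResidueField V) := by
  have hκ : Module.length k (ResidueField V) =
      Module.length (ResidueField k) (ResidueField V) := by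
    rw [length_restrictScalars k V,
      Module.length_eq_of_surjective (M := ResidueField V) (residue_surjective (R := V)),
      Module.length_eq_one, one_mul]
  rw [← ENat.toNat_natCast (Module.finrank k V), ← Module.length_eq_finrank,
    length_restrictScalars k V, ENat.toNat_mul, ← hκ, Module.length_eq_finrank, ENat.toNat_natCast]

theorem trace_eq_zero_of_residue_eq_zero {x : V} (hx : residue V x = 0) :
    Algebra.trace k V x = 0 := by
  have : IsArtinianRing V := .of_finite k V
  obtain ⟨n, hn⟩ := isArtinianRing_iff_isNilpotent_maximalIdeal V |>.mp this
  refine (Algebra.isNilpotent_trace_of_isNilpotent ⟨n, ?_⟩).eq_zero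
  simpa [hn] using Ideal.pow_mem_pow ((residue_eq_zero_iff x).mp hx) n

variable (k) in
theorem trace_eq_length_nsmul_trace_residue [Algebra.IsSeparable k (ResidueField V)] (x : V) :
    Algebra.trace k V x =
      (Module.length V V).toNat • Algebra.trace k (ResidueField V) (residue V x) := by
  -- `V` contains a field of representatives, because its residue field is separable over `k`.
  have : Algebra.FormallyEtale k (ResidueField V) := .of_isSeparable _ _
  have : IsArtinianRing V := .of_finite k V
  obtain ⟨s, hs⟩ := Algebra.FormallySmooth.exists_lift (R := k) (maximalIdeal V)
    ((isArtinianRing_iff_isNilpotent_maximalIdeal V).mp this) (AlgHom.id k (ResidueField V))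
  let := s.toRingHom.toAlgebra
  have : IsScalarTower k (ResidueField V) V := .of_algebraMap_eq fun y => (s.commutes y).symm
  have : Module.Finite (ResidueField V) V := .of_restrictScalars_finite k _ _
  have hfinrank : Module.finrank (ResidueField V) V = (Module.length V V).toNat := by
    refine Nat.eq_of_mul_eq_mul_left (Module.finrank_pos (R := k) (M := ResidueField V)) ?_
    rw [Module.finrank_mul_finrank, finrank_eq_length_mul_finrank_residueField, mul_comm]
  have hsx : residue V (x - s (residue V x)) = 0 := by
    rw [map_sub, sub_eq_zero]
    exact (DFunLike.congr_fun hs (residue V x)).symm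
  calc Algebra.trace k V x = Algebra.trace k V (algebraMap (ResidueField V) V (residue V x)) :=
        sub_eq_zero.mp (by rw [← map_sub]; exact trace_eq_zero_of_residue_eq_zero hsx)
    _ = _ := by
        rw [← Algebra.trace_trace (S := ResidueField V), Algebra.trace_algebraMap, map_nsmul,
          hfinrank]

variable (k) in
theorem exists_trace_ne_zero_of_length_ne_zero [Algebra.IsSeparable k (ResidueField V)]
    (h : ((Module.length V V).toNat : k) ≠ 0) : ∃ z : V, Algebra.trace k V z ≠ 0 := by
  obtain ⟨y, hy⟩ := Algebra.trace_surjective k (ResidueField V) 1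
  obtain ⟨z, rfl⟩ := residue_surjective y
  exact ⟨z, by simpa [trace_eq_length_nsmul_trace_residue k, hy]⟩

end ResidueTrace

theorem residueField_map_bijective_of_surjective {A B : Type*} [CommRing A]
    [IsLocalRing A] [CommRing B] [IsLocalRing B] (f : A →+* B) [IsLocalHom f]
    (hf : Function.Surjective f) :
    Function.Bijective (ResidueField.map f) := by
  refine ⟨RingHom.injective _, fun y => ?_⟩
  obtain ⟨b, rfl⟩ := residue_surjective y
  obtain ⟨a, rfl⟩ := hf b
  exact ⟨residue A a, ResidueField.map_residue f a⟩

theorem map_maximalIdeal_le (A B : Type*) [CommRing A] [IsLocalRing A] [CommRing B] [IsLocalRing B]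
    [Algebra A B] [IsLocalHom (algebraMap A B)] :
    (maximalIdeal A).map (algebraMap A B) ≤ maximalIdeal B :=
  ((local_hom_TFAE (algebraMap A B)).out 0 2).mp ‹_›

attribute [local instance] Ideal.Quotient.field in
theorem exists_isUnit_trace {A B : Type*} [CommRing A] [IsLocalRing A] [CommRing B] [IsLocalRing B]
    [Algebra A B] [IsLocalHom (algebraMap A B)] [Module.Finite A B] [Module.Free A B]
    [Algebra.IsSeparable (ResidueField A) (ResidueField B)]
    (h : ((Module.length B (B ⧸ (maximalIdeal A).map (algebraMap A B))).toNat :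
      ResidueField A) ≠ 0) :
    ∃ z : B, IsUnit (Algebra.trace A B z) := by
  let V := B ⧸ (maximalIdeal A).map (algebraMap A B)
  let π : B →+* V := Ideal.Quotient.mk _
  have hπ : Function.Surjective π := Ideal.Quotient.mk_surjective
  have : Nontrivial V := Ideal.Quotient.nontrivial_iff.mpr
    (ne_top_of_le_ne_top Ideal.IsPrime.ne_top' (map_maximalIdeal_le A B))
  have : IsLocalRing V := .of_surjective' π hπ
  have : IsLocalHom π := .of_surjective π hπ
  have : Module.Finite (A ⧸ maximalIdeal A) V := Module.Finite.of_restrictScalars_finite A _ _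
  have : Algebra.IsSeparable (A ⧸ maximalIdeal A) (ResidueField V) :=
    Algebra.IsSeparable.of_equiv_equiv (RingEquiv.refl (ResidueField A))
      (RingEquiv.ofBijective _ (residueField_map_bijective_of_surjective π hπ)) (by
        ext x
        obtain ⟨a, rfl⟩ := residue_surjective x
        rfl)
  obtain ⟨z, hz⟩ := exists_trace_ne_zero_of_length_ne_zero (A ⧸ maximalIdeal A) (V := V)
    (by rwa [← Module.length_eq_of_surjective hπ])
  obtain ⟨z, rfl⟩ := hπ z
  refine ⟨z, by_contra fun hn => hz ?_⟩
  rw [Algebra.trace_quotient_mk]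
  exact Ideal.Quotient.eq_zero_iff_mem.mpr hn

theorem exists_units_norm_eq_of_map_maximalIdeal_eq_pow {A B : Type*} [CommRing A]
    [HenselianLocalRing A] [CommRing B] [IsDomain B] [IsDiscreteValuationRing B]
    [Algebra A B] [IsLocalHom (algebraMap A B)] [Module.Finite A B] [Module.Free A B]
    [Algebra.IsSeparable (ResidueField A) (ResidueField B)] {e : ℕ}
    (hmap : (maximalIdeal A).map (algebraMap A B) = maximalIdeal B ^ e)
    (he : (e : ResidueField A) ≠ 0) {x : A} (hx : x - 1 ∈ maximalIdeal A) :
    ∃ y : Bˣ, Algebra.norm A (y : B) = x := by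
  obtain ⟨z, hz⟩ := exists_isUnit_trace (A := A) (B := B) (by
    rwa [hmap, IsDiscreteValuationRing.length_quotient_pow_maximalIdeal, ENat.toNat_natCast])
  exact exists_units_norm_eq_of_isUnit_trace hz hx

theorem isPrecomplete_of_finite {R : Type*} [CommRing R] (I : Ideal R) [IsPrecomplete I R]
    (M : Type*) [AddCommGroup M] [Module R M] [Module.Finite R M] : IsPrecomplete I M := by
  have hof : AdicCompletion.of I M =
      ((AdicCompletion.ofTensorProduct I M).restrictScalars R) ∘ₗ
        (AdicCompletion.of I R).rTensor M ∘ₗ (TensorProduct.lid R M).symm := by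
    ext x
    have hone : AdicCompletion.of I R 1 = 1 := rfl
    simp [hone]
  rw [← AdicCompletion.of_surjective_iff, hof]
  exact (AdicCompletion.ofTensorProduct_surjective_of_finite I M).comp
    ((LinearMap.rTensor_surjective M (AdicCompletion.of_surjective I R)).comp
      (TensorProduct.lid R M).symm.surjective)

theorem isPrecomplete_of_le_of_pow_le {R : Type*} [CommRing R] {I J : Ideal R} {M : Type*}
    [AddCommGroup M] [Module R M] [IsPrecomplete J M] {k : ℕ} (hJI : J ≤ I) (hIJ : I ^ k ≤ J) :
    IsPrecomplete I M := by
  have hIJ_pow (n : ℕ) : I ^ ((k + 1) * n) ≤ J ^ n := by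
    rw [pow_mul]
    exact Ideal.pow_right_mono ((Ideal.pow_le_pow_right k.le_succ).trans hIJ) n
  refine ⟨fun f hf => ?_⟩
  obtain ⟨L, hL⟩ := IsPrecomplete.prec (I := J) inferInstance (f := fun n => f ((k + 1) * n))
    fun hmn => (hf (Nat.mul_le_mul_left (k + 1) hmn)).mono
      (Submodule.smul_mono_left (hIJ_pow _))
  refine ⟨L, fun n => (hf (Nat.le_mul_of_pos_left n k.succ_pos)).trans ?_⟩
  exact (hL n).mono (Submodule.smul_mono_left (Ideal.pow_right_mono hJI n))

theorem isAdicComplete_maximalIdeal_of_finite (R A : Type*) [CommRing R] [IsNoetherianRing R]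
    [IsLocalRing R] [IsAdicComplete (maximalIdeal R) R] [CommRing A] [IsLocalRing A] [Algebra R A]
    [IsLocalHom (algebraMap R A)] [Module.Finite R A] : IsAdicComplete (maximalIdeal A) A := by
  have : IsNoetherianRing A := .of_finite R A
  let J := (maximalIdeal R).map (algebraMap R A)
  have : IsPrecomplete (maximalIdeal R) A := isPrecomplete_of_finite _ _
  have : IsPrecomplete J A := IsPrecomplete.map_algebraMap_iff.mpr this
  have : IsArtinianRing (A ⧸ J) := by
    let := Ideal.Quotient.field (maximalIdeal R)
    have : Module.Finite (R ⧸ maximalIdeal R) (A ⧸ J) := .of_restrictScalars_finite R _ _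
    exact .of_finite (R ⧸ maximalIdeal R) (A ⧸ J)
  obtain ⟨k, hk⟩ := exists_maximalIdeal_pow_le_of_isArtinianRing_quotient J
  exact { toIsPrecomplete := isPrecomplete_of_le_of_pow_le (map_maximalIdeal_le R A) hk }

theorem henselianLocalRing_of_isAdicComplete (A : Type*) [CommRing A] [IsLocalRing A]
    [IsAdicComplete (maximalIdeal A) A] : HenselianLocalRing A where
  is_henselian f hf a₀ h₀ h₁ :=
    HenselianRing.is_henselian f hf a₀ h₀ (h₁.map (Ideal.Quotient.mk (maximalIdeal A)))

/-- `ord` is the normalized (surjective onto `ℤ`) discrete valuation, written additively on `Lˣ`,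
whose valuation ring is `O`. -/
structure IsNormalizedOrd {R L : Type*} [CommRing R] [Field L] [Algebra R L] (O : Subalgebra R L)
    (ord : Lˣ → ℤ) : Prop where
  map_mul (x y : Lˣ) : ord (x * y) = ord x + ord y
  surjective : Function.Surjective ord
  mem_iff (x : Lˣ) : (x : L) ∈ O ↔ 0 ≤ ord x

namespace IsNormalizedOrd

variable {R L : Type*} [CommRing R] [Field L] [Algebra R L] {O : Subalgebra R L} {ord : Lˣ → ℤ}

theorem map_one (h : IsNormalizedOrd O ord) : ord 1 = 0 := by
  simpa using h.map_mul 1 1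

theorem map_inv (h : IsNormalizedOrd O ord) (x : Lˣ) : ord x⁻¹ = -ord x := by
  have := h.map_mul x x⁻¹
  rw [mul_inv_cancel, h.map_one] at this
  linarith

theorem map_pow (h : IsNormalizedOrd O ord) (x : Lˣ) (n : ℕ) : ord (x ^ n) = n * ord x := by
  induction n with
  | zero => simp [h.map_one]
  | succ n ih => rw [pow_succ, h.map_mul, ih]; push_cast; ring

theorem associated_of_eq (h : IsNormalizedOrd O ord) {a b : O} {x y : Lˣ} (ha : (a : L) = x)
    (hb : (b : L) = y) (hxy : ord x = ord y) : Associated a b := by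
  have hmem : ((x⁻¹ * y : Lˣ) : L) ∈ O := (h.mem_iff _).mpr (by rw [h.map_mul, h.map_inv]; omega)
  have hmem' : ((y⁻¹ * x : Lˣ) : L) ∈ O := (h.mem_iff _).mpr (by rw [h.map_mul, h.map_inv]; omega)
  refine ⟨⟨⟨_, hmem⟩, ⟨_, hmem'⟩, Subtype.ext ?_, Subtype.ext ?_⟩, Subtype.ext ?_⟩
  · exact congrArg Units.val (show x⁻¹ * y * (y⁻¹ * x) = 1 by group)
  · exact congrArg Units.val (show y⁻¹ * x * (x⁻¹ * y) = 1 by group)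
  · simp [ha, hb]

theorem isUnit_iff (h : IsNormalizedOrd O ord) {a : O} {x : Lˣ} (ha : (a : L) = x) :
    IsUnit a ↔ ord x = 0 := by
  refine ⟨fun ⟨u, hu⟩ => le_antisymm ?_ ((h.mem_iff x).mp (ha ▸ a.2)), fun hx => ?_⟩
  · have hinv : ((x⁻¹ : Lˣ) : L) = (↑u⁻¹ : O) := by
      rw [Units.val_inv_eq_inv_val, ← ha, ← hu]
      exact inv_eq_of_mul_eq_one_right (congrArg Subtype.val u.mul_inv)
    have := (h.mem_iff x⁻¹).mp (hinv ▸ Subtype.property _)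
    rw [h.map_inv] at this
    linarith
  · exact associated_one_iff_isUnit.mp
      (h.associated_of_eq ha (y := 1) rfl (hx.trans h.map_one.symm))

theorem irreducible_of_eq_one (h : IsNormalizedOrd O ord) {a : O} {x : Lˣ} (ha : (a : L) = x)
    (hx : ord x = 1) : Irreducible a := by
  refine ⟨fun hu => by simp [(h.isUnit_iff ha).mp hu] at hx, fun b c hbc => ?_⟩
  have hbc' : (x : L) = b * c := by rw [← ha, hbc]; rfl
  have hb : (b : L) ≠ 0 := left_ne_zero_of_mul (hbc' ▸ x.ne_zero)
  have hc : (c : L) ≠ 0 := right_ne_zero_of_mul (hbc' ▸ x.ne_zero)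
  have hsum := h.map_mul (Units.mk0 _ hb) (Units.mk0 _ hc)
  rw [← (Units.ext hbc' : x = Units.mk0 _ hb * Units.mk0 _ hc), hx] at hsum
  have hb_nonneg := (h.mem_iff (Units.mk0 _ hb)).mp b.2
  have hc_nonneg := (h.mem_iff (Units.mk0 _ hc)).mp c.2
  rw [h.isUnit_iff (Units.val_mk0 hb).symm, h.isUnit_iff (Units.val_mk0 hc).symm]
  omega

theorem isDiscreteValuationRing (h : IsNormalizedOrd O ord) : IsDiscreteValuationRing O := by
  obtain ⟨x, hx⟩ := h.surjective 1
  let ϖ : O := ⟨x, (h.mem_iff x).mpr (by omega)⟩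
  refine IsDiscreteValuationRing.ofHasUnitMulPowIrreducibleFactorization
    ⟨ϖ, h.irreducible_of_eq_one rfl hx, fun {b} hb => ?_⟩
  have hb' : (b : L) ≠ 0 := by simpa using hb
  obtain ⟨n, hn⟩ := Int.eq_ofNat_of_zero_le ((h.mem_iff (Units.mk0 _ hb')).mp b.2)
  exact ⟨n, h.associated_of_eq (x := x ^ n) (by simp [ϖ]) (Units.val_mk0 hb').symm
    (by rw [h.map_pow, hx, hn, mul_one])⟩

theorem span_singleton_eq_maximalIdeal_pow [IsLocalRing O] (h : IsNormalizedOrd O ord) {a : O}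
    {x : Lˣ} (ha : (a : L) = x) {n : ℕ} (hx : ord x = n) : Ideal.span {a} = maximalIdeal O ^ n := by
  have := h.isDiscreteValuationRing
  obtain ⟨y, hy⟩ := h.surjective 1
  let ϖ : O := ⟨y, (h.mem_iff y).mpr (by omega)⟩
  rw [(h.irreducible_of_eq_one (a := ϖ) rfl hy).maximalIdeal_eq, Ideal.span_singleton_pow,
    Ideal.span_singleton_eq_span_singleton]
  exact h.associated_of_eq ha (y := y ^ n) (by simp [ϖ]) (by rw [h.map_pow, hy, hx, mul_one])

theorem map_maximalIdeal_eq_pow {R F K : Type*} [CommRing R] [Field F] [Algebra R F]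
    [Field K] [Algebra R K] [Algebra F K] {A : Subalgebra R F} {B : Subalgebra R K}
    [IsLocalRing A] [IsLocalRing B] [Algebra A B]
    (hAB : ∀ a : A, (algebraMap A B a : K) = algebraMap F K a)
    {ordF : Fˣ → ℤ} {ordK : Kˣ → ℤ} (hF : IsNormalizedOrd A ordF) (hK : IsNormalizedOrd B ordK)
    {e : ℕ} (he : ∀ x : Fˣ, ordK (Units.map (algebraMap F K).toMonoidHom x) = e * ordF x) :
    (maximalIdeal A).map (algebraMap A B) = maximalIdeal B ^ e := by
  obtain ⟨x, hx⟩ := hF.surjective 1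
  let ϖ : A := ⟨x, (hF.mem_iff x).mpr (by omega)⟩
  rw [← pow_one (maximalIdeal A), ← hF.span_singleton_eq_maximalIdeal_pow (a := ϖ) rfl hx,
    Ideal.map_span, Set.image_singleton]
  exact hK.span_singleton_eq_maximalIdeal_pow (hAB ϖ) (by rw [he, hx, mul_one])

end IsNormalizedOrd

theorem exists_units_norm_eq_of_finite_of_map_maximalIdeal_eq_pow (R : Type*) {A B : Type*}
    [CommRing R] [IsNoetherianRing R] [IsLocalRing R] [IsAdicComplete (maximalIdeal R) R]
    [PerfectField (ResidueField R)] [CommRing A] [IsLocalRing A] [Algebra R A]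
    [IsLocalHom (algebraMap R A)] [Module.Finite R A] [CommRing B] [IsDomain B]
    [IsDiscreteValuationRing B] [Algebra A B] [IsLocalHom (algebraMap A B)] [Module.Finite A B]
    [Module.Free A B] {e : ℕ}
    (hmap : (maximalIdeal A).map (algebraMap A B) = maximalIdeal B ^ e)
    (he : (e : ResidueField R) ≠ 0) {x : A} (hx : x - 1 ∈ maximalIdeal A) :
    ∃ y : Bˣ, Algebra.norm A (y : B) = x := by
  have := isAdicComplete_maximalIdeal_of_finite R A
  have := henselianLocalRing_of_isAdicComplete A
  have : PerfectField (ResidueField A) := Algebra.IsAlgebraic.perfectField (ResidueField R)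
  have he' : (e : ResidueField A) ≠ 0 := by
    rwa [← map_natCast (algebraMap (ResidueField R) (ResidueField A)), map_ne_zero]
  exact exists_units_norm_eq_of_map_maximalIdeal_eq_pow hmap he' hx

section IntegralClosure

variable (R F K : Type*) [CommRing R] [Field F] [Algebra R F] [Field K] [Algebra F K]
  [Algebra R K] [IsScalarTower R F K]

/-- The inclusion `𝒪_F → 𝒪_K` of the integral closures of `R` in the fields of a tower `K / F`. -/
abbrev integralClosureAlgebra : Algebra (integralClosure R F) (integralClosure R K) :=
  (IsScalarTower.toAlgHom R F K).mapIntegralClosure.toRingHom.toAlgebra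

attribute [local instance] integralClosureAlgebra

theorem isScalarTower_integralClosure :
    IsScalarTower (integralClosure R F) (integralClosure R K) K :=
  .of_algebraMap_eq fun _ => rfl

theorem isScalarTower_base_integralClosure :
    IsScalarTower R (integralClosure R F) (integralClosure R K) :=
  .of_algebraMap_eq fun r => Subtype.ext (IsScalarTower.algebraMap_apply R F K r)

attribute [local instance] isScalarTower_integralClosure isScalarTower_base_integralClosure

theorem faithfulSMul_integralClosure : FaithfulSMul (integralClosure R F) (integralClosure R K) :=
  (faithfulSMul_iff_algebraMap_injective _ _).mpr fun _ _ h =>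
    Subtype.ext ((algebraMap F K).injective (congrArg Subtype.val h))

attribute [local instance] faithfulSMul_integralClosure

theorem isLocalHom_integralClosure :
    IsLocalHom (algebraMap (integralClosure R F) (integralClosure R K)) :=
  have : Algebra.IsIntegral (integralClosure R F) (integralClosure R K) := .tower_top R
  Algebra.IsIntegral.isLocalHom _ _

variable {R F K} in
theorem mem_map_norm_integerUnits [Algebra.IsAlgebraic F K]
    [IsFractionRing (integralClosure R F) F]
    [Module.Finite (integralClosure R F) (integralClosure R K)]
    [Module.Free (integralClosure R F) (integralClosure R K)] {x : Fˣ} (y : (integralClosure R K)ˣ)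
    (h : (Algebra.norm (integralClosure R F) (y : integralClosure R K) : F) = x) :
    x ∈ Subgroup.map (Units.map (Algebra.norm F : K →* F)) (integerUnits R K) := by
  have : IsIntegralClosure (integralClosure R K) (integralClosure R F) K := .tower_top (R := R)
  have := IsIntegralClosure.isLocalization (integralClosure R F) F K (integralClosure R K)
  refine ⟨Units.map (algebraMap (integralClosure R K) K).toMonoidHom y,
    ⟨(y : integralClosure R K).2, (↑y⁻¹ : integralClosure R K).2⟩, Units.ext ?_⟩
  exact (Algebra.norm_localization (integralClosure R F)
    (nonZeroDivisors (integralClosure R F)) (y : integralClosure R K)).trans h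

theorem stmt_5_general (R Q : Type*) {F K : Type*} [CommRing R] [IsDomain R]
    [IsDiscreteValuationRing R] [IsAdicComplete (maximalIdeal R) R] [PerfectField (ResidueField R)]
    [Field Q] [Algebra R Q] [IsFractionRing R Q]
    [Field F] [Algebra Q F] [FiniteDimensional Q F] [Algebra R F] [IsScalarTower R Q F]
    [IsLocalRing (integralClosure R F)]
    [Field K] [Algebra F K] [FiniteDimensional F K] [Algebra Q K] [IsScalarTower Q F K]
    [Algebra.IsSeparable Q K] [Algebra R K] [IsScalarTower R Q K]
    {ordF : Fˣ → ℤ} (hF : IsNormalizedOrd (integralClosure R F) ordF)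
    {ordK : Kˣ → ℤ} (hK : IsNormalizedOrd (integralClosure R K) ordK)
    {e : ℕ} (he : ∀ x : Fˣ, ordK (Units.map (algebraMap F K).toMonoidHom x) = e * ordF x)
    (htame : (e : ResidueField R) ≠ 0) (x : Fˣ)
    (hx : ∃ m ∈ maximalIdeal (integralClosure R F), (x : F) = 1 + (m : F)) :
    x ∈ Subgroup.map (Units.map (Algebra.norm F : K →* F)) (integerUnits R K) := by
  obtain ⟨m, hm, hxm⟩ := hx
  have : IsScalarTower R F K := .to₁₃₄ R Q F K
  have : FiniteDimensional Q K := .trans Q F K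
  have : Algebra.IsSeparable Q F := Algebra.isSeparable_tower_bot_of_isSeparable Q F K
  have := hF.isDiscreteValuationRing
  have := hK.isDiscreteValuationRing
  have : Module.Finite R (integralClosure R F) := IsIntegralClosure.finite R Q F _
  have : Module.Finite R (integralClosure R K) := IsIntegralClosure.finite R Q K _
  have : Module.Finite (integralClosure R F) (integralClosure R K) :=
    .of_restrictScalars_finite R _ _
  have : IsFractionRing (integralClosure R F) F :=
    integralClosure.isFractionRing_of_finite_extension Q F
  have : FaithfulSMul R F := .trans R Q F
  have : IsLocalHom (algebraMap R (integralClosure R F)) := Algebra.IsIntegral.isLocalHom _ _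
  have := isLocalHom_integralClosure R F K
  obtain ⟨y, hy⟩ := exists_units_norm_eq_of_finite_of_map_maximalIdeal_eq_pow R
    (hF.map_maximalIdeal_eq_pow (fun _ => rfl) hK he) htame (x := 1 + m) (by simpa using hm)
  exact mem_map_norm_integerUnits y (by rw [hy, hxm]; rfl)

end IntegralClosure

section PadicInt

variable {p : ℕ} [Fact p.Prime]

theorem natCast_residueField_padicInt_ne_zero {e : ℕ} (he : ¬ p ∣ e) :
    (e : ResidueField ℤ_[p]) ≠ 0 := by
  rwa [← map_ne_zero (PadicInt.residueField (p := p)), map_natCast, Ne, ZMod.natCast_eq_zero_iff]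

variable (p) in
theorem finite_residueField_padicInt : Finite (ResidueField ℤ_[p]) :=
  .of_equiv _ (PadicInt.residueField (p := p)).symm.toEquiv

end PadicInt

/-- Let `K/F` be a finite tamely ramified extension of `p`-adic fields, i.e.
`p ∤ e(K/F)`. Then every principal unit of `F` is the norm of a unit of `K`:
`1 + 𝔪_F ⊆ N_{K/F}(𝒪_K^×)`. Here `𝒪_F` is the integral closure of `ℤ_p` in `F` (a local
ring), `𝔪_F` its maximal ideal, and the ramification index `e` is characterized via the
normalized valuations by `ord_K(x) = e·ord_F(x)` for `x ∈ F^×`. -/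
theorem stmt_5 (p : ℕ) [Fact p.Prime]
    (F : Type*) [Field F] [Algebra ℚ_[p] F] [FiniteDimensional ℚ_[p] F]
    [Algebra ℤ_[p] F] [IsScalarTower ℤ_[p] ℚ_[p] F]
    [IsLocalRing ↥(integralClosure ℤ_[p] F)]
    (K : Type*) [Field K] [Algebra F K] [FiniteDimensional F K]
    [Algebra ℚ_[p] K] [IsScalarTower ℚ_[p] F K]
    [Algebra ℤ_[p] K] [IsScalarTower ℤ_[p] ℚ_[p] K]
    (ordF : Fˣ → ℤ) (hordF_mul : ∀ x y : Fˣ, ordF (x * y) = ordF x + ordF y)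
    (hordF_surj : Function.Surjective ordF)
    (hordF_int : ∀ x : Fˣ, IsIntegral ℤ_[p] ((x : Fˣ) : F) ↔ 0 ≤ ordF x)
    (ordK : Kˣ → ℤ) (hordK_mul : ∀ x y : Kˣ, ordK (x * y) = ordK x + ordK y)
    (hordK_surj : Function.Surjective ordK)
    (hordK_int : ∀ x : Kˣ, IsIntegral ℤ_[p] ((x : Kˣ) : K) ↔ 0 ≤ ordK x)
    (e : ℕ) (he : ∀ x : Fˣ, ordK (Units.map (algebraMap F K).toMonoidHom x) = e * ordF x)
    (htame : ¬ p ∣ e) :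
    ∀ x : Fˣ, (∃ m ∈ IsLocalRing.maximalIdeal ↥(integralClosure ℤ_[p] F),
        ((x : Fˣ) : F) = 1 + (m : F)) →
      x ∈ Subgroup.map (Units.map (Algebra.norm F : K →* F)) (integerUnits ℤ_[p] K) := by
  have : FiniteDimensional ℚ_[p] K := .trans ℚ_[p] F K
  have : Finite (ResidueField ℤ_[p]) := finite_residueField_padicInt p
  exact stmt_5_general ℤ_[p] ℚ_[p] ⟨hordF_mul, hordF_surj, hordF_int⟩
    ⟨hordK_mul, hordK_surj, hordK_int⟩ he (natCast_residueField_padicInt_ne_zero htame)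
end

section
/- Let K = ℚ(√7). Then 16 is an 8th power in the completion K_v for every place v of K: for every nonzero prime ideal 𝔭 of 𝒪_K = ℤ[√7], 16 is an 8th power in the 𝔭-adic completion K_𝔭, and 16 is an 8th power in ℝ (the completion at each of the two real places). Nevertheless, 16 is not an 8th power in K itself. -/
open IsDedekindDomain NumberField

/-!
The factorization `y⁸ - 16 = (y² - 2)(y² + 2)((y + 1)² + 1)((y - 1)² + 1)` shows that `16` is an
8th power in a field exactly when `-1`, `2` or `-2` is a square there. In a finite field one of
these three is always a square, because a product of two nonsquares is a square, and this lifts to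
`K_𝔭` when `𝔭 ∤ 2`. Now let `K = ℚ(√d)` with `d ≡ 7 mod 8`, for instance `d = 7`. When `𝔭 ∣ 2`,
the integer `-d ≡ 1 mod 8` is a square in `K_𝔭` and `d` is a square in `K`, so `-1` is a square in
`K_𝔭`. On the other hand, if a rational `q` is a square in `K`, then `q` or `d q` is a square in
`ℚ`; this is impossible for `q = ±2`, as `±2` and `±2d` are `2 mod 4`, and for `q = -1` unless `-d`
is a square.
-/

theorem exists_pow_eight_eq_sixteen_iff {R : Type*} [CommRing R] [IsDomain R] :
    (∃ y : R, y ^ 8 = 16) ↔ IsSquare (-1 : R) ∨ IsSquare (2 : R) ∨ IsSquare (-2 : R) := by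
  constructor
  · rintro ⟨y, hy⟩
    have factored : (y ^ 2 - 2) * ((y ^ 2 + 2) * (((y + 1) ^ 2 + 1) * ((y - 1) ^ 2 + 1))) = 0 := by
      linear_combination hy
    rcases mul_eq_zero.1 factored with h | h
    · exact .inr (.inl ⟨y, by linear_combination -h⟩)
    rcases mul_eq_zero.1 h with h | h
    · exact .inr (.inr ⟨y, by linear_combination -h⟩)
    rcases mul_eq_zero.1 h with h | h
    · exact .inl ⟨y + 1, by linear_combination -h⟩
    · exact .inl ⟨y - 1, by linear_combination -h⟩
  · rintro (⟨i, hi⟩ | ⟨s, hs⟩ | ⟨s, hs⟩)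
    · have sq_eq : (i + 1) ^ 2 = 2 * i := by linear_combination -hi
      refine ⟨i + 1, ?_⟩
      calc (i + 1) ^ 8 = ((i + 1) ^ 2) ^ 4 := by ring
        _ = 16 * (i * i) ^ 2 := by rw [sq_eq]; ring
        _ = 16 := by rw [← hi]; ring
    · exact ⟨s, by rw [show s ^ 8 = (s * s) ^ 4 by ring, ← hs]; norm_num⟩
    · exact ⟨s, by rw [show s ^ 8 = (s * s) ^ 4 by ring, ← hs]; norm_num⟩

theorem isSquare_or_isSquare_or_isSquare_mul_of_finite {F : Type*} [Field F] [Finite F] (a b : F) :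
    IsSquare a ∨ IsSquare b ∨ IsSquare (a * b) := by
  classical
  have := Fintype.ofFinite F
  by_contra! ⟨ha, hb, hab⟩
  have hab_ne : a * b ≠ 0 := fun h => hab (h ▸ IsSquare.zero)
  refine hab ((quadraticChar_one_iff_isSquare hab_ne).1 ?_)
  rw [map_mul, quadraticChar_neg_one_iff_not_isSquare.2 ha,
    quadraticChar_neg_one_iff_not_isSquare.2 hb, neg_one_mul, neg_neg]

section Ultrametric

theorem exists_sq_add_self_add_eq_zero {R : Type*} [NormedCommRing R] [CompleteSpace R]
    [IsUltrametricDist R] {c : R} (hc : ‖c‖ < 1) : ∃ x : R, x ^ 2 + x + c = 0 := by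
  let f : R → R := fun x => -(x ^ 2 + c)
  let s : Set R := Metric.closedBall 0 ‖c‖
  have norm_le {x : R} (hx : x ∈ s) : ‖x‖ ≤ ‖c‖ := mem_closedBall_zero_iff.1 hx
  have maps : Set.MapsTo f s s := by
    intro x hx
    have hsq : ‖x ^ 2‖ ≤ ‖c‖ := by
      refine (norm_pow_le' x two_pos).trans ?_
      nlinarith [norm_le hx, norm_nonneg x]
    simpa only [f, s, mem_closedBall_zero_iff, norm_neg] using
      (IsUltrametricDist.norm_add_le_max _ _).trans (max_le hsq le_rfl)
  have contracting : ContractingWith ‖c‖₊ (maps.restrict f s s) := by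
    refine ⟨by exact_mod_cast hc, LipschitzWith.of_dist_le_mul ?_⟩
    rintro ⟨x, hx⟩ ⟨y, hy⟩
    have hadd : ‖x + y‖ ≤ ‖c‖ :=
      (IsUltrametricDist.norm_add_le_max _ _).trans (max_le (norm_le hx) (norm_le hy))
    have hsub : f x - f y = -((x + y) * (x - y)) := by ring
    simp only [Subtype.dist_eq, Set.MapsTo.val_restrict_apply, dist_eq_norm]
    rw [hsub, norm_neg]
    exact (norm_mul_le _ _).trans (mul_le_mul_of_nonneg_right hadd (norm_nonneg _))
  obtain ⟨x, -, hx, -⟩ := contracting.exists_fixedPoint' Metric.isClosed_closedBall.isComplete maps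
    (x := 0) (by simp [s]) (edist_ne_top _ _)
  have fixed : -(x ^ 2 + c) = x := hx
  exact ⟨x, by linear_combination -fixed⟩

variable {F : Type*} [NormedField F] [CompleteSpace F] [IsUltrametricDist F]

theorem isSquare_of_norm_sq_sub_lt {a d : F} (h : ‖a ^ 2 - d‖ < ‖4 * a ^ 2‖) : IsSquare d := by
  have hne : 4 * a ^ 2 ≠ 0 := norm_pos_iff.1 ((norm_nonneg _).trans_lt h)
  have hc : ‖(a ^ 2 - d) / (4 * a ^ 2)‖ < 1 := by
    rwa [norm_div, div_lt_one (norm_pos_iff.2 hne)]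
  obtain ⟨x, hx⟩ := exists_sq_add_self_add_eq_zero hc
  have hx' : 4 * a ^ 2 * (x ^ 2 + x) + (a ^ 2 - d) = 0 := by
    rw [← mul_div_cancel₀ (a ^ 2 - d) hne, ← mul_add, hx, mul_zero]
  exact ⟨a * (2 * x + 1), by linear_combination -hx'⟩

theorem isSquare_neg_one_of_isSquare_eight_mul_sub_one (h2 : ‖(2 : F)‖ < 1) {c : F}
    (hc : ‖c‖ ≤ 1) (h : IsSquare (8 * c - 1)) : IsSquare (-1 : F) := by
  rcases eq_or_ne (2 : F) 0 with two_eq | two_ne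
  · exact ⟨1, by linear_combination -two_eq⟩
  have h2c : ‖2 * c‖ < 1 := by
    rw [norm_mul]
    exact mul_lt_one_of_nonneg_of_lt_one_left (norm_nonneg _) h2 hc
  have h8c : ‖8 * c‖ < ‖(4 : F)‖ := by
    rw [show 8 * c = 4 * (2 * c) by ring, norm_mul]
    refine mul_lt_of_lt_one_right (norm_pos_iff.2 ?_) h2c
    rw [show (4 : F) = 2 * 2 by norm_num]
    exact mul_ne_zero two_ne two_ne
  have hneg : IsSquare (1 - 8 * c) := by
    refine isSquare_of_norm_sq_sub_lt (a := 1) ?_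
    simpa using h8c
  have hne : 8 * c - 1 ≠ 0 := by
    intro h0
    have norm_four : ‖(4 : F)‖ ≤ 1 := by
      simpa using IsUltrametricDist.norm_natCast_le_one F 4
    rw [sub_eq_zero.1 h0, norm_one] at h8c
    exact h8c.not_ge norm_four
  have := hneg.div h
  rwa [← neg_sub, neg_div, div_self hne] at this

end Ultrametric

section AdicCompletion

variable {K : Type*} [Field K] [NumberField K] {v : HeightOneSpectrum (𝓞 K)}

theorem isSquare_embedding_of_isSquare_quotientMk {r : 𝓞 K} (h2 : 2 ∉ v.asIdeal)
    (hr : r ∉ v.asIdeal) (h : IsSquare (Ideal.Quotient.mk v.asIdeal r)) :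
    IsSquare (FinitePlace.embedding v (r : K)) := by
  obtain ⟨s, hs⟩ := h
  obtain ⟨a, rfl⟩ := Ideal.Quotient.mk_surjective s
  have hsub : a ^ 2 - r ∈ v.asIdeal := by
    rw [← Ideal.Quotient.mk_eq_mk_iff_sub_mem, hs, map_pow, sq]
  have ha : a ∉ v.asIdeal := fun ha =>
    hr ((sub_sub_cancel (a ^ 2) r) ▸ v.asIdeal.sub_mem (v.asIdeal.pow_mem_of_mem ha 2 two_pos) hsub)
  have h4a : 4 * a ^ 2 ∉ v.asIdeal := by
    rw [show 4 * a ^ 2 = (2 * a) ^ 2 by ring]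
    exact fun h => (v.isPrime.mem_or_mem (v.isPrime.mem_of_pow_mem 2 h)).elim h2 ha
  have hlt := (FinitePlace.norm_lt_one_iff_mem (K := K) v _).2 hsub
  rw [← (FinitePlace.norm_eq_one_iff_notMem (K := K) v _).2 h4a] at hlt
  refine isSquare_of_norm_sq_sub_lt (a := FinitePlace.embedding v (a : K)) ?_
  simpa [map_ofNat] using hlt

theorem exists_pow_eight_eq_sixteen_adicCompletion_of_two_notMem (h2 : 2 ∉ v.asIdeal) :
    ∃ y : v.adicCompletion K, y ^ 8 = 16 := by
  let := Ideal.Quotient.field v.asIdeal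
  have : Finite (𝓞 K ⧸ v.asIdeal) := Ideal.finiteQuotientOfFreeOfNeBot _ v.ne_bot
  have hneg_one : (-1 : 𝓞 K) ∉ v.asIdeal := fun h => v.isPrime.one_notMem (neg_mem_iff.1 h)
  have hneg_two : (-2 : 𝓞 K) ∉ v.asIdeal := fun h => h2 (neg_mem_iff.1 h)
  rw [exists_pow_eight_eq_sixteen_iff]
  rcases isSquare_or_isSquare_or_isSquare_mul_of_finite (Ideal.Quotient.mk v.asIdeal (-1))
    (Ideal.Quotient.mk v.asIdeal 2) with h | h | h
  · left
    simpa using isSquare_embedding_of_isSquare_quotientMk h2 hneg_one h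
  · right; left
    simpa [map_ofNat] using isSquare_embedding_of_isSquare_quotientMk h2 h2 h
  · right; right
    rw [← map_mul, neg_one_mul] at h
    simpa [map_ofNat] using isSquare_embedding_of_isSquare_quotientMk h2 hneg_two h

theorem exists_pow_eight_eq_sixteen_adicCompletion {a : 𝓞 K} (ha : IsSquare (8 * a - 1 : K)) :
    ∃ y : v.adicCompletion K, y ^ 8 = 16 := by
  by_cases h2 : 2 ∈ v.asIdeal
  · have norm_two : ‖(2 : v.adicCompletion K)‖ < 1 := by
      simpa [map_ofNat] using (FinitePlace.norm_lt_one_iff_mem (K := K) v 2).2 h2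
    have norm_a := FinitePlace.norm_le_one K v a
    refine exists_pow_eight_eq_sixteen_iff.2 (.inl ?_)
    refine isSquare_neg_one_of_isSquare_eight_mul_sub_one norm_two norm_a ?_
    simpa [map_ofNat] using ha.map (FinitePlace.embedding v)
  · exact exists_pow_eight_eq_sixteen_adicCompletion_of_two_notMem h2

end AdicCompletion

section QuadraticExtension

theorem exists_eq_algebraMap_add_algebraMap_mul {R A : Type*} [CommRing R] [CommRing A]
    [Algebra R A] {d : R} {θ : A} (hθ : θ ^ 2 = algebraMap R A d)
    (hgen : Algebra.adjoin R {θ} = ⊤) (y : A) :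
    ∃ a b : R, y = algebraMap R A a + algebraMap R A b * θ := by
  have hy : y ∈ Algebra.adjoin R {θ} := hgen ▸ Algebra.mem_top
  induction hy using Algebra.adjoin_induction with
  | mem x hx => exact ⟨0, 1, by simpa using hx⟩
  | algebraMap r => exact ⟨r, 0, by simp⟩
  | add x y _ _ hx hy =>
    obtain ⟨a, b, rfl⟩ := hx
    obtain ⟨a', b', rfl⟩ := hy
    exact ⟨a + a', b + b', by simp only [map_add]; ring⟩
  | mul x y _ _ hx hy =>
    obtain ⟨a, b, rfl⟩ := hx
    obtain ⟨a', b', rfl⟩ := hy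
    refine ⟨a * a' + d * b * b', a * b' + b * a', ?_⟩
    simp only [map_add, map_mul]
    linear_combination algebraMap R A b * algebraMap R A b' * hθ

theorem isSquare_or_isSquare_mul_of_isSquare_algebraMap {F K : Type*} [Field F] [Field K]
    [Algebra F K] (h2 : (2 : F) ≠ 0) {d q : F} {θ : K} (hθ : θ ^ 2 = algebraMap F K d)
    (hgen : Algebra.adjoin F {θ} = ⊤) (hq : IsSquare (algebraMap F K q)) :
    IsSquare q ∨ IsSquare (d * q) := by
  have inj := (algebraMap F K).injective
  obtain ⟨y, hy⟩ := hq
  obtain ⟨a, b, rfl⟩ := exists_eq_algebraMap_add_algebraMap_mul hθ hgen y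
  have expanded :
      algebraMap F K (q - a ^ 2 - d * b ^ 2) = algebraMap F K (2 * a * b) * θ := by
    simp only [map_sub, map_mul, map_pow, map_ofNat]
    linear_combination hy + algebraMap F K b ^ 2 * hθ
  by_cases hab : 2 * a * b = 0
  · have hq : q = a ^ 2 + d * b ^ 2 := by
      rw [hab, map_zero, zero_mul, map_eq_zero_iff _ inj] at expanded
      linear_combination expanded
    rcases mul_eq_zero.1 hab with ha | rfl
    · obtain rfl := (mul_eq_zero.1 ha).resolve_left h2
      exact .inr ⟨d * b, by rw [hq]; ring⟩
    · exact .inl ⟨a, by rw [hq]; ring⟩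
  · obtain ⟨t, rfl⟩ : ∃ t, algebraMap F K t = θ :=
      ⟨(q - a ^ 2 - d * b ^ 2) / (2 * a * b), by
        rw [map_div₀, expanded, mul_div_cancel_left₀ _ ((map_ne_zero_iff _ inj).2 hab)]⟩
    exact .inl ⟨a + b * t, inj (by simpa using hy)⟩

end QuadraticExtension

theorem not_isSquare_of_modEq_two_mod_four {n : ℤ} (hn : n ≡ 2 [ZMOD 4]) : ¬ IsSquare n := by
  intro h
  have hsq : IsSquare (n : ZMod 4) := h.map (Int.castRingHom (ZMod 4))
  rw [(ZMod.intCast_eq_intCast_iff n 2 4).2 hn] at hsq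
  exact absurd hsq (by decide)

theorem stmt_7_general (K : Type*) [Field K] [NumberField K] (d : ℤ) (hd : d ≡ 7 [ZMOD 8])
    (hneg : ¬ IsSquare (-d)) (θ : K) (hθ : θ ^ 2 = d) (hgen : Algebra.adjoin ℚ {θ} = ⊤) :
    (∀ v : HeightOneSpectrum (𝓞 K), ∃ y : v.adicCompletion K, y ^ 8 = 16) ∧
    (∃ y : ℝ, y ^ 8 = 16) ∧
    ¬ ∃ y : K, y ^ 8 = 16 := by
  refine ⟨fun v => ?_, exists_pow_eight_eq_sixteen_iff.2 (.inr (.inl ⟨√2, by simp⟩)), ?_⟩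
  · obtain ⟨m, hm⟩ := hd.dvd
    refine exists_pow_eight_eq_sixteen_adicCompletion (a := (1 - m : ℤ)) ⟨θ, ?_⟩
    rw [← sq, hθ, show d = 8 * (1 - m) - 1 by linarith]
    simp
  · have descend {n : ℤ} (h : IsSquare (n : K)) : IsSquare n ∨ IsSquare (d * n) := by
      have := isSquare_or_isSquare_mul_of_isSquare_algebraMap (q := n) two_ne_zero
        (d := (d : ℚ)) (by simpa using hθ) hgen (by simpa using h)
      exact_mod_cast this
    rw [exists_pow_eight_eq_sixteen_iff]
    rintro (h | h | h)
    · rcases descend (n := -1) (by simpa using h) with h | h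
      · exact absurd h.nonneg (by norm_num)
      · exact hneg (by simpa using h)
    · rcases descend (n := 2) (by simpa using h) with h | h <;>
        exact not_isSquare_of_modEq_two_mod_four (by unfold Int.ModEq at hd ⊢; omega) h
    · rcases descend (n := -2) (by simpa using h) with h | h <;>
        exact not_isSquare_of_modEq_two_mod_four (by unfold Int.ModEq at hd ⊢; omega) h

/-- Let `K = ℚ(√7)` (a field over `ℚ` generated by `θ` with `θ² = 7`). Then
`16` is an 8th power in the completion of `K` at every place: in the `𝔭`-adic completion
`K_𝔭` for every nonzero prime ideal `𝔭` of `𝒪_K`, and in `ℝ` (the completion at each of the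
two real places). Nevertheless, `16` is not an 8th power in `K` itself. -/
theorem stmt_7 (K : Type*) [Field K] [NumberField K] (θ : K) (hθ : θ ^ 2 = 7)
    (hgen : Algebra.adjoin ℚ {θ} = ⊤) :
    (∀ v : HeightOneSpectrum (𝓞 K), ∃ y : v.adicCompletion K, y ^ 8 = 16) ∧
    (∃ y : ℝ, y ^ 8 = 16) ∧
    ¬ ∃ y : K, y ^ 8 = 16 :=
  stmt_7_general K 7 rfl (fun h => absurd h.nonneg (by norm_num)) θ (by exact_mod_cast hθ) hgen
end

section
/- Let k be a number field, let e ∈ ℕ, and let 2^r be the largest power of 2 dividing e. Let ε ∈ 𝒪_k^× be a unit such that ε is an e-th power in the completion k_v for all but finitely many places v of k. Then ε is an e-th power in k_v for every place v of k which does not both lie above 2 and fail to split in the extension k(μ_{2^r})/k; in other words, ε ∈ (k_v^×)^e for all places v outside the set of finite places above 2 that do not split in k(μ_{2^r})/k. -/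
/-!
Being an `e`-th power almost everywhere only enters through residue fields: `a` is an `e`-th power
modulo almost all primes, a property which passes to finite extensions.

Suppose `b ^ q = a` in a Galois extension `K / F` containing the `q`-th roots of unity. If `φ` is
a Frobenius at a prime where `a` is a `q`-th power, then `φ` fixes `ξ * b` for some `q`-th root of
unity `ξ`. A Frobenius can be found outside any proper normal subgroup of `Gal(K/F)`: otherwise
almost all primes of `F` would have two different primes of the same norm above them in the fixed
field `L`, which makes `ζ_F ^ 2` bounded by `ζ_L` near `1`, whereas both have a simple pole there.
If `Gal(K/F)` is a cyclic `p`-group, a Frobenius outside its maximal subgroup is a generator. Hence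
`a` is a `q`-th power in the fixed field of every cyclic `p`-subgroup `D` of `Gal(k(μ_q)/k)`.

For odd `q = p ^ n`, taking for `D` the Sylow `p`-subgroup and then norms gives `a ∈ k ^ q`. For
`q = 2 ^ r` let `D` be the decomposition group of a prime above `v`, whose fixed field embeds in
`k_v`. When `v ∤ 2` or `v` is infinite, `D` is cyclic. When `v` splits, `D ≠ ⊤`; if `D` is not
cyclic, a `2 ^ r`-th root `β` of `a` in `k(i)` can be multiplied by a root of unity so that it
becomes fixed by `D`, because some `τ ∈ D` acts on the roots of unity by an exponent `≡ 3 mod 4`.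
-/

open IsDedekindDomain NumberField

section EulerSum

open ENNReal

variable {X Y : Type*}

/-- The formal Euler product `∏ₓ (1 - w x)⁻¹`, expanded as the sum over all multisets `m` of the
products of the weights of the elements of `m`. -/
noncomputable def eulerSum (w : X → ℝ≥0∞) : ℝ≥0∞ :=
  ∑' m : Multiset X, (m.map w).prod

lemma eulerSum_mono {w w' : X → ℝ≥0∞} (h : w ≤ w') : eulerSum w ≤ eulerSum w' := by
  refine ENNReal.tsum_le_tsum fun m => ?_
  induction m using Multiset.induction_on with
  | empty => simp
  | cons x m ih =>
    simp only [Multiset.map_cons, Multiset.prod_cons]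
    exact mul_le_mul' (h x) ih

lemma eulerSum_comp_le (w : Y → ℝ≥0∞) {f : X → Y} (hf : f.Injective) :
    eulerSum (w ∘ f) ≤ eulerSum w := by
  simp only [eulerSum, ← Multiset.map_map]
  exact ENNReal.tsum_comp_le_tsum_of_injective (Multiset.map_injective hf) fun m => (m.map w).prod

lemma eulerSum_comp_equiv (w : Y → ℝ≥0∞) (f : X ≃ Y) : eulerSum (w ∘ f) = eulerSum w := by
  refine (eulerSum_comp_le w f.injective).antisymm ?_
  simpa [Function.comp_assoc] using eulerSum_comp_le (w ∘ f) f.symm.injective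

lemma multiset_filterMap_none (m : Multiset X) : m.filterMap (fun _ => (none : Option Y)) = 0 := by
  induction m using Multiset.induction_on with simp_all

lemma bijective_multisetDisjSum :
    Function.Bijective fun p : Multiset X × Multiset Y => p.1.disjSum p.2 := by
  constructor
  · rintro ⟨a, b⟩ ⟨a', b'⟩ h
    have hl := congrArg (Multiset.filterMap Sum.getLeft?) h
    have hr := congrArg (Multiset.filterMap Sum.getRight?) h
    simp only [Multiset.disjSum, Multiset.filterMap_add, Multiset.filterMap_map,
      Function.comp_def, Sum.getLeft?_inl, Sum.getLeft?_inr, Sum.getRight?_inl, Sum.getRight?_inr,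
      Multiset.filterMap_some, multiset_filterMap_none, add_zero, zero_add] at hl hr
    exact Prod.ext hl hr
  · intro m
    induction m using Multiset.induction_on with
    | empty => exact ⟨(0, 0), rfl⟩
    | cons z m ih =>
      obtain ⟨⟨a, b⟩, rfl⟩ := ih
      cases z with
      | inl x => exact ⟨(x ::ₘ a, b), by simp [Multiset.disjSum]⟩
      | inr y => exact ⟨(a, y ::ₘ b), by simp [Multiset.disjSum]⟩

lemma eulerSum_sumElim (w : X → ℝ≥0∞) (w' : Y → ℝ≥0∞) :
    eulerSum (Sum.elim w w') = eulerSum w * eulerSum w' := by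
  rw [eulerSum, ← (Equiv.ofBijective _ bijective_multisetDisjSum).tsum_eq, ENNReal.tsum_prod',
    eulerSum, ← ENNReal.tsum_mul_right]
  refine tsum_congr fun a => ?_
  rw [eulerSum, ← ENNReal.tsum_mul_left]
  refine tsum_congr fun b => ?_
  simp [Multiset.disjSum, Multiset.map_map]

lemma eulerSum_ne_top_of_finite [Finite X] {w : X → ℝ≥0∞} (hw : ∀ x, w x < 1) :
    eulerSum w ≠ ⊤ := by
  induction X using Finite.induction_empty_option with
  | of_equiv e ih =>
    rw [← eulerSum_comp_equiv w e]
    exact ih fun x => hw (e x)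
  | h_empty => simp [eulerSum, Subsingleton.elim (default : Multiset PEmpty) 0]
  | @h_option Z _ ih =>
    have eulerSum_unit_ne_top : eulerSum (fun _ : Unit => w none) ≠ ⊤ := by
      have : Function.Bijective (fun n : ℕ => Multiset.replicate n ()) := by
        refine ⟨Multiset.replicate_left_injective _, fun m => ⟨m.card, ?_⟩⟩
        exact (Multiset.eq_replicate_card.2 fun _ _ => rfl).symm
      rw [eulerSum, ← (Equiv.ofBijective _ this).tsum_eq]
      simp only [Equiv.ofBijective_apply, Multiset.map_replicate, Multiset.prod_replicate]
      simpa [ENNReal.tsum_geometric, tsub_eq_zero_iff_le] using hw none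
    have hw' : w = Sum.elim (fun x => w (some x)) (fun _ => w none) ∘
        Equiv.optionEquivSumPUnit Z := by
      ext (_ | x) <;> simp
    rw [hw', eulerSum_comp_equiv, eulerSum_sumElim]
    exact ENNReal.mul_ne_top (ih fun x => hw _) eulerSum_unit_ne_top
end EulerSum

section DedekindZeta

open ENNReal Filter Topology

lemma bijective_multisetProd_asIdeal {R : Type*} [CommRing R] [IsDedekindDomain R] :
    Function.Bijective fun m : Multiset (HeightOneSpectrum R) =>
      (⟨(m.map HeightOneSpectrum.asIdeal).prod, Multiset.prod_ne_zero fun h => by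
        obtain ⟨P, -, hP⟩ := Multiset.mem_map.1 h
        exact P.ne_bot hP⟩ : {I : Ideal R // I ≠ 0}) := by
  classical
  constructor
  · have factors_prod (m : Multiset (HeightOneSpectrum R)) :
        UniqueFactorizationMonoid.normalizedFactors (m.map HeightOneSpectrum.asIdeal).prod =
          m.map HeightOneSpectrum.asIdeal := by
      refine UniqueFactorizationMonoid.normalizedFactors_prod_of_prime fun p hp => ?_
      obtain ⟨P, -, rfl⟩ := Multiset.mem_map.1 hp
      exact P.prime
    intro a b h
    have h_factors := congrArg UniqueFactorizationMonoid.normalizedFactors (congrArg Subtype.val h)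
    simp only [factors_prod] at h_factors
    exact Multiset.map_injective (fun _ _ => HeightOneSpectrum.ext) h_factors
  · rintro ⟨I, hI⟩
    obtain ⟨m, hm, hmI⟩ := UniqueFactorizationMonoid.exists_prime_factors I hI
    refine ⟨m.pmap (fun P (hP : Prime P) => ⟨P, Ideal.isPrime_of_prime hP, hP.ne_zero⟩) hm,
      Subtype.ext ?_⟩
    simpa only [Multiset.map_pmap, Multiset.pmap_eq_map, Multiset.map_id'] using
      associated_iff_eq.1 hmI

variable (K : Type*) [Field K] [NumberField K]

/-- The weight `N(P)⁻ˢ` of a prime `P` of a number field, for real `s`, so that the Euler product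
with these weights is the Dedekind zeta function. -/
noncomputable def primeWeight (s : ℝ) (P : HeightOneSpectrum (𝓞 K)) : ℝ≥0∞ :=
  (Ideal.absNorm P.asIdeal : ℝ≥0∞) ^ (-s)

variable {K} in
lemma primeWeight_lt_one {s : ℝ} (hs : 0 < s) (P : HeightOneSpectrum (𝓞 K)) :
    primeWeight K s P < 1 :=
  ENNReal.rpow_lt_one_of_one_lt_of_neg
    (by exact_mod_cast NumberField.HeightOneSpectrum.one_lt_absNorm P) (by linarith)

variable {K} in
lemma antitone_primeWeight : Antitone (primeWeight K) := fun s t hst P =>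
  ENNReal.rpow_le_rpow_of_exponent_le
    (by exact_mod_cast (NumberField.HeightOneSpectrum.one_lt_absNorm P).le) (by linarith)

lemma prod_map_primeWeight (s : ℝ) (m : Multiset (HeightOneSpectrum (𝓞 K))) :
    (m.map (primeWeight K s)).prod =
      (Ideal.absNorm (m.map HeightOneSpectrum.asIdeal).prod : ℝ≥0∞) ^ (-s) := by
  induction m using Multiset.induction_on with
  | empty => simp
  | cons P m ih =>
    simp only [Multiset.map_cons, Multiset.prod_cons, ih, map_mul, Nat.cast_mul, primeWeight]
    rw [ENNReal.mul_rpow_of_ne_top (by simp) (by simp)]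

lemma eulerSum_primeWeight_eq_tsum_ideal (s : ℝ) : eulerSum (primeWeight K s) =
    ∑' I : {I : Ideal (𝓞 K) // I ≠ 0}, (Ideal.absNorm I.1 : ℝ≥0∞) ^ (-s) := by
  rw [eulerSum, ← (Equiv.ofBijective _ bijective_multisetProd_asIdeal).tsum_eq]
  exact tsum_congr fun m => prod_map_primeWeight K s m

lemma eulerSum_primeWeight_eq_tsum_enorm_term (s : ℝ) : eulerSum (primeWeight K s) =
    ∑' n, ‖LSeries.term (fun n => Nat.card {I : Ideal (𝓞 K) // Ideal.absNorm I = n}) s n‖ₑ := by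
  rw [eulerSum_primeWeight_eq_tsum_ideal,
    ← ENNReal.tsum_fiberwise _ fun I : {I : Ideal (𝓞 K) // I ≠ 0} => Ideal.absNorm I.1]
  refine tsum_congr fun n => ?_
  rcases eq_or_ne n 0 with rfl | hn
  · have : IsEmpty ((fun I : {I : Ideal (𝓞 K) // I ≠ 0} => Ideal.absNorm I.1) ⁻¹' {0}) :=
      ⟨fun I => I.1.2 (Ideal.absNorm_eq_zero_iff.1 I.2)⟩
    simp
  have : Finite {I : Ideal (𝓞 K) // Ideal.absNorm I = n} :=
    (Ideal.finite_setOfPred_absNorm_eq n).to_subtype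
  let e : (fun I : {I : Ideal (𝓞 K) // I ≠ 0} => Ideal.absNorm I.1) ⁻¹' {n} ≃
      {I : Ideal (𝓞 K) // Ideal.absNorm I = n} :=
    { toFun I := ⟨I.1.1, I.2⟩
      invFun I := ⟨⟨I.1, by rintro h; exact hn (by rw [← I.2, h]; simp)⟩, I.2⟩ }
  have norm_eq (I : (fun I : {I : Ideal (𝓞 K) // I ≠ 0} => Ideal.absNorm I.1) ⁻¹' {n}) :
      (Ideal.absNorm I.1.1 : ℝ≥0∞) ^ (-s) = (n : ℝ≥0∞) ^ (-s) := by
    rw [show Ideal.absNorm I.1.1 = n from I.2]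
  rw [tsum_congr norm_eq, ← e.symm.tsum_eq, ENNReal.tsum_const, ENat.card_eq_coe_natCard,
    ← ofReal_norm, LSeries.norm_term_eq, if_neg hn, div_eq_mul_inv, Complex.norm_natCast,
    ENNReal.ofReal_mul (by positivity), ENNReal.ofReal_natCast, Complex.ofReal_re,
    ENNReal.ofReal_inv_of_pos (by positivity), ← ENNReal.ofReal_rpow_of_pos (by positivity),
    ENNReal.ofReal_natCast, ENNReal.rpow_neg]
  rfl

variable {K} in
lemma eulerSum_primeWeight_eq_ofReal_dedekindZeta {s : ℝ} (hs : dedekindZeta K s ≠ 0) :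
    eulerSum (primeWeight K s) = ENNReal.ofReal (dedekindZeta K s).re := by
  set a : ℕ → ℂ := fun n => Nat.card {I : Ideal (𝓞 K) // Ideal.absNorm I = n}
  have term_eq_norm (n : ℕ) : LSeries.term a s n = (‖LSeries.term a s n‖ : ℂ) := by
    rw [LSeries.norm_term_eq, LSeries.term_def]
    split_ifs
    · simp
    · rw [Complex.ofReal_re, Complex.ofReal_div, Complex.ofReal_cpow (by positivity)]
      simp [a]
  have summable_norm : Summable fun n => ‖LSeries.term a s n‖ := by
    by_contra h
    refine hs (tsum_eq_zero_of_not_summable fun h' => h h'.norm)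
  have zeta_eq : dedekindZeta K s = ((∑' n, ‖LSeries.term a s n‖ : ℝ) : ℂ) := by
    rw [Complex.ofReal_tsum]
    exact tsum_congr term_eq_norm
  rw [eulerSum_primeWeight_eq_tsum_enorm_term, zeta_eq, Complex.ofReal_re,
    ENNReal.ofReal_tsum_of_nonneg (fun _ => norm_nonneg _) summable_norm]
  simp only [ofReal_norm, a]

lemma tendsto_sub_one_mul_eulerSum_primeWeight :
    Tendsto (fun s : ℝ => ENNReal.ofReal (s - 1) * eulerSum (primeWeight K s)) (𝓝[>] 1)
      (𝓝 (ENNReal.ofReal (dedekindZeta_residue K))) := by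
  have h_zeta := tendsto_sub_one_mul_dedekindZeta_nhdsGT K
  have zeta_ne_zero : ∀ᶠ s : ℝ in 𝓝[>] 1, (s - 1) * dedekindZeta K s ≠ 0 :=
    h_zeta.eventually_ne (by exact_mod_cast dedekindZeta_residue_ne_zero K)
  refine (ENNReal.tendsto_ofReal ((Complex.continuous_re.tendsto _).comp h_zeta)).congr' ?_
  filter_upwards [zeta_ne_zero, self_mem_nhdsWithin] with s hs h_one
  rw [eulerSum_primeWeight_eq_ofReal_dedekindZeta (right_ne_zero_of_mul hs),
    ← ENNReal.ofReal_mul (sub_nonneg.2 (le_of_lt h_one)), Function.comp_apply,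
    ← Complex.ofReal_one, ← Complex.ofReal_sub, Complex.re_ofReal_mul]

variable {K} {L : Type*} [Field L] [NumberField L]

lemma exists_eulerSum_primeWeight_sq_le {T : Set (HeightOneSpectrum (𝓞 K))} (hT : T.Finite)
    {f g : ↥Tᶜ → HeightOneSpectrum (𝓞 L)} (hf : f.Injective) (hg : g.Injective)
    (h_disj : ∀ P P', f P ≠ g P')
    (hf_norm : ∀ P, Ideal.absNorm (f P).asIdeal = Ideal.absNorm P.1.asIdeal)
    (hg_norm : ∀ P, Ideal.absNorm (g P).asIdeal = Ideal.absNorm P.1.asIdeal) :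
    ∃ C ≠ ⊤, ∀ s : ℝ, 1 < s →
      eulerSum (primeWeight K s) ^ 2 ≤ C * eulerSum (primeWeight L s) := by
  classical
  have : Finite T := hT
  set C := eulerSum fun P : T => primeWeight K 1 P
  have hC : C ≠ ⊤ := eulerSum_ne_top_of_finite fun P => primeWeight_lt_one one_pos P.1
  refine ⟨C ^ 2, ENNReal.pow_ne_top hC, fun s hs => ?_⟩
  have sq_le : eulerSum (fun P : ↥Tᶜ => primeWeight K s P) ^ 2 ≤ eulerSum (primeWeight L s) := by
    rw [sq, ← eulerSum_sumElim]
    refine le_of_eq_of_le (congrArg eulerSum ?_)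
      (eulerSum_comp_le _ (hf.sumElim hg h_disj))
    ext (P | P) <;> simp [primeWeight, hf_norm, hg_norm]
  have le_mul : eulerSum (primeWeight K s) ≤
      C * eulerSum (fun P : ↥Tᶜ => primeWeight K s P) := by
    rw [← eulerSum_comp_equiv _ (Equiv.Set.sumCompl T),
      show primeWeight K s ∘ Equiv.Set.sumCompl T = Sum.elim (fun P : T => primeWeight K s P)
        (fun P : ↥Tᶜ => primeWeight K s P) by ext (P | P) <;> rfl, eulerSum_sumElim]
    gcongr
    exact eulerSum_mono fun P => antitone_primeWeight hs.le P.1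
  calc eulerSum (primeWeight K s) ^ 2
      ≤ (C * eulerSum (fun P : ↥Tᶜ => primeWeight K s P)) ^ 2 := by gcongr
    _ = C ^ 2 * eulerSum (fun P : ↥Tᶜ => primeWeight K s P) ^ 2 := mul_pow _ _ _
    _ ≤ C ^ 2 * eulerSum (primeWeight L s) := by gcongr

/- The zeta functions of `K` and `L` both have a simple pole at `1`, so `ζ_K ^ 2` is not
`O(ζ_L)`. -/
lemma exists_eq_of_injective_of_absNorm_eq {T : Set (HeightOneSpectrum (𝓞 K))} (hT : T.Finite)
    {f g : ↥Tᶜ → HeightOneSpectrum (𝓞 L)} (hf : f.Injective) (hg : g.Injective)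
    (hf_norm : ∀ P, Ideal.absNorm (f P).asIdeal = Ideal.absNorm P.1.asIdeal)
    (hg_norm : ∀ P, Ideal.absNorm (g P).asIdeal = Ideal.absNorm P.1.asIdeal) :
    ∃ P P', f P = g P' := by
  by_contra! h_disj
  obtain ⟨C, hC, h_sq⟩ := exists_eulerSum_primeWeight_sq_le hT hf hg h_disj hf_norm hg_norm
  have h_le : ∀ᶠ s : ℝ in 𝓝[>] 1, (ENNReal.ofReal (s - 1) * eulerSum (primeWeight K s)) ^ 2 ≤
      C * ENNReal.ofReal (s - 1) * (ENNReal.ofReal (s - 1) * eulerSum (primeWeight L s)) := by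
    filter_upwards [self_mem_nhdsWithin] with s hs
    calc (ENNReal.ofReal (s - 1) * eulerSum (primeWeight K s)) ^ 2
        ≤ ENNReal.ofReal (s - 1) ^ 2 * (C * eulerSum (primeWeight L s)) := by
          rw [mul_pow]; gcongr; exact h_sq s hs
      _ = _ := by ring
  have h_sub : Tendsto (fun s : ℝ => C * ENNReal.ofReal (s - 1)) (𝓝[>] 1) (𝓝 0) := by
    have : Tendsto (fun s : ℝ => s - 1) (𝓝[>] 1) (𝓝 0) :=
      ((continuous_sub_right (1 : ℝ)).tendsto' 1 0 (sub_self 1)).mono_left nhdsWithin_le_nhds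
    simpa using ENNReal.Tendsto.const_mul (ENNReal.tendsto_ofReal this) (Or.inr hC)
  have h_lhs := ENNReal.Tendsto.pow (n := 2) (tendsto_sub_one_mul_eulerSum_primeWeight K)
  have h_rhs := ENNReal.Tendsto.mul h_sub (Or.inr ENNReal.ofReal_ne_top)
    (tendsto_sub_one_mul_eulerSum_primeWeight L) (Or.inr ENNReal.zero_ne_top)
  have residue_sq_le := le_of_tendsto_of_tendsto h_lhs h_rhs h_le
  simp [(dedekindZeta_residue_pos K).not_ge] at residue_sq_le

end DedekindZeta

section PrimesBelow

open Pointwise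

lemma finite_setOf_mem_asIdeal {R : Type*} [CommRing R] [IsDedekindDomain R] {x : R} (hx : x ≠ 0) :
    {v : HeightOneSpectrum R | x ∈ v.asIdeal}.Finite := by
  simpa only [Ideal.dvd_span_singleton] using
    Ideal.finite_factors (R := R) (I := Ideal.span {x}) (by simpa using hx)

section DedekindDomain

variable (R : Type*) {S : Type*} [CommRing R] [IsDedekindDomain R] [CommRing S]
  [IsDedekindDomain S] [Algebra R S] [Algebra.IsIntegral R S] [FaithfulSMul R S]

lemma heightOneSpectrum_under_surjective :
    Function.Surjective
      (HeightOneSpectrum.under R : HeightOneSpectrum S → HeightOneSpectrum R) := by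
  intro P
  have := P.isMaximal
  obtain ⟨Q, hQ, hQP⟩ := Ideal.exists_maximal_ideal_liesOver_of_isIntegral (S := S) P.asIdeal
  refine ⟨⟨Q, hQ.isPrime, ?_⟩, HeightOneSpectrum.ext hQP.over.symm⟩
  rintro rfl
  exact P.ne_bot (hQP.over.trans (by simp))

lemma tendsto_heightOneSpectrum_under_cofinite :
    Filter.Tendsto (HeightOneSpectrum.under R : HeightOneSpectrum S → HeightOneSpectrum R)
      Filter.cofinite Filter.cofinite := by
  refine Filter.Tendsto.cofinite_of_finite_preimage_singleton fun P => ?_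
  obtain ⟨x, hxP, hx⟩ := Submodule.exists_mem_ne_zero_of_ne_bot P.ne_bot
  refine (finite_setOf_mem_asIdeal (x := algebraMap R S x) (by simpa using hx)).subset ?_
  rintro Q rfl
  exact hxP

end DedekindDomain

variable {F L : Type*} [Field F] [Field L] [Algebra F L]

/-- The conjugate `σ Q` of a prime `Q`. -/
noncomputable def conjPrime (σ : Gal(L/F)) (Q : HeightOneSpectrum (𝓞 L)) :
    HeightOneSpectrum (𝓞 L) where
  asIdeal := σ • Q.asIdeal
  isPrime := inferInstance
  ne_bot h := Q.ne_bot (by simpa using congrArg (σ⁻¹ • ·) h)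

instance smulCommClass_ringOfIntegers : SMulCommClass Gal(L/F) (𝓞 F) (𝓞 L) where
  smul_comm σ x y := by
    have smul_coe : σ • algebraMap (𝓞 F) (𝓞 L) x = algebraMap (𝓞 F) (𝓞 L) x :=
      RingOfIntegers.ext (σ.commutes x)
    simp only [Algebra.smul_def, smul_mul', smul_coe]

lemma under_conjPrime (σ : Gal(L/F)) (Q : HeightOneSpectrum (𝓞 L)) :
    (conjPrime σ Q).under (𝓞 F) = Q.under (𝓞 F) :=
  HeightOneSpectrum.ext (Ideal.under_smul _ _ _)

variable [NumberField L]

lemma exists_smul_ringOfIntegers_ne {σ : Gal(L/F)} (hσ : σ ≠ 1) : ∃ x : 𝓞 L, σ • x ≠ x := by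
  contrapose! hσ
  ext y
  obtain ⟨a, b, -, rfl⟩ := IsFractionRing.div_surjective (A := 𝓞 L) y
  have apply_coe (x : 𝓞 L) : σ (algebraMap (𝓞 L) L x) = algebraMap (𝓞 L) L x :=
    congrArg (algebraMap (𝓞 L) L) (hσ x)
  rw [map_div₀, apply_coe, apply_coe, AlgEquiv.one_apply]

variable [NumberField F]

variable (F) in
lemma bijective_quotientMap_of_absNorm_le {Q : HeightOneSpectrum (𝓞 L)}
    (h : Ideal.absNorm Q.asIdeal ≤ Ideal.absNorm (Q.under (𝓞 F)).asIdeal) :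
    Function.Bijective (algebraMap (𝓞 F ⧸ Q.asIdeal.under (𝓞 F)) (𝓞 L ⧸ Q.asIdeal)) := by
  have : Finite (𝓞 L ⧸ Q.asIdeal) := inferInstance
  refine Function.Injective.bijective_of_nat_card_le (FaithfulSMul.algebraMap_injective _ _) ?_
  simpa only [Ideal.absNorm_apply, Submodule.cardQuot_apply,
    HeightOneSpectrum.under_asIdeal] using h

theorem exists_absNorm_under_lt {σ : Gal(L/F)} (hσ : σ ≠ 1)
    {S : Set (HeightOneSpectrum (𝓞 F))} (hS : S.Finite) :
    ∃ Q : HeightOneSpectrum (𝓞 L), Q.under (𝓞 F) ∉ S ∧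
      Ideal.absNorm (Q.under (𝓞 F)).asIdeal < Ideal.absNorm Q.asIdeal := by
  by_contra! h_le
  have h_bij (Q : HeightOneSpectrum (𝓞 L)) (hQ : Q.under (𝓞 F) ∉ S) :=
    bijective_quotientMap_of_absNorm_le F (h_le Q hQ)
  have h_norm (Q : HeightOneSpectrum (𝓞 L)) (hQ : Q.under (𝓞 F) ∉ S) :
      Ideal.absNorm Q.asIdeal = Ideal.absNorm (Q.under (𝓞 F)).asIdeal := by
    simpa only [Ideal.absNorm_apply, Submodule.cardQuot_apply,
      HeightOneSpectrum.under_asIdeal] using (Nat.card_eq_of_bijective _ (h_bij Q hQ)).symm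
  obtain ⟨x, hx⟩ := exists_smul_ringOfIntegers_ne hσ
  set B : Set (HeightOneSpectrum (𝓞 L)) := {Q | σ • x - x ∈ Q.asIdeal}
  have hB : B.Finite := finite_setOf_mem_asIdeal (sub_ne_zero.2 hx)
  obtain ⟨f, hf⟩ := (heightOneSpectrum_under_surjective (𝓞 F) (S := 𝓞 L)).hasRightInverse
  have hσf (P : HeightOneSpectrum (𝓞 F)) : (conjPrime σ (f P)).under (𝓞 F) = P := by
    rw [under_conjPrime, hf]
  obtain ⟨P, P', h_eq⟩ := exists_eq_of_injective_of_absNorm_eq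
    (T := S ∪ HeightOneSpectrum.under (𝓞 F) '' B) (hS.union (hB.image _))
    (f := fun P => f P) (g := fun P => conjPrime σ (f P))
    (hf.injective.comp Subtype.val_injective)
    ((Function.LeftInverse.injective hσf).comp Subtype.val_injective)
    (fun P => by rw [h_norm _ (by rw [hf]; exact fun h => P.2 (Or.inl h)), hf])
    (fun P => by rw [h_norm _ (by rw [hσf]; exact fun h => P.2 (Or.inl h)), hσf])
  obtain rfl : P = P' := Subtype.ext (by rw [← hf P, h_eq, hσf])
  refine P.2 (Or.inr ⟨f P, Set.mem_ofPred.2 ?_, hf P⟩)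
  obtain ⟨z, hz⟩ := (h_bij (f P) (by rw [hf]; exact fun h => P.2 (Or.inl h))).2
    (Ideal.Quotient.mk _ x)
  obtain ⟨z, rfl⟩ := Ideal.Quotient.mk_surjective z
  have hzx : algebraMap (𝓞 F) (𝓞 L) z - x ∈ (f P).asIdeal := (Ideal.Quotient.eq).1 hz
  have hzσx : algebraMap (𝓞 F) (𝓞 L) z - σ • x ∈ (f P).asIdeal := by
    rw [h_eq]
    simpa only [smul_sub, smul_algebraMap, conjPrime] using
      Ideal.smul_mem_pointwise_smul_iff (a := σ).2 hzx
  simpa only [sub_sub_sub_cancel_left] using (f P).asIdeal.sub_mem hzx hzσx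

end PrimesBelow

section Frobenius

lemma absNorm_le_of_forall_pow_sub_self_mem {L : Type*} [Field L] [NumberField L]
    {Q : HeightOneSpectrum (𝓞 L)} {n : ℕ} (hn : 1 < n)
    (h : ∀ x : 𝓞 L, x ^ n - x ∈ Q.asIdeal) : Ideal.absNorm Q.asIdeal ≤ n := by
  classical
  let _ := Fintype.ofFinite (𝓞 L ⧸ Q.asIdeal)
  have := Q.isMaximal
  let _ := Ideal.Quotient.field Q.asIdeal
  rw [Ideal.absNorm_apply, Submodule.cardQuot_apply,
    ← FiniteField.X_pow_card_sub_X_natDegree_eq (𝓞 L ⧸ Q.asIdeal) hn, Nat.card_eq_fintype_card,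
    ← Finset.card_univ]
  refine Polynomial.card_le_degree_of_subset_roots fun y _ => ?_
  obtain ⟨y, rfl⟩ := Ideal.Quotient.mk_surjective y
  rw [Polynomial.mem_roots (FiniteField.X_pow_card_sub_X_ne_zero _ hn)]
  simpa [sub_eq_zero] using (Ideal.Quotient.eq).2 (h y)

variable {F K : Type*} [Field F] [NumberField F] [Field K] [NumberField K] [Algebra F K]
  [IsGalois F K]

theorem exists_isArithFrobAt_notMem {H : Subgroup Gal(K/F)} [H.Normal] (hH : H ≠ ⊤)
    {S : Set (HeightOneSpectrum (𝓞 F))} (hS : S.Finite) :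
    ∃ Q : HeightOneSpectrum (𝓞 K), Q.under (𝓞 F) ∉ S ∧
      ∃ φ ∉ H, IsArithFrobAt (𝓞 F) φ Q.asIdeal := by
  let L := IntermediateField.fixedField H
  obtain ⟨g, hg⟩ : ∃ g, g ∉ H := by
    contrapose! hH
    exact (Subgroup.eq_top_iff' H).2 hH
  have restrict_ne_one : AlgEquiv.restrictNormalHom L g ≠ 1 := by
    intro h
    rw [← MonoidHom.mem_ker, IntermediateField.restrictNormalHom_ker,
      IntermediateField.fixingSubgroup_fixedField] at h
    exact hg h
  obtain ⟨QL, hQL, h_lt⟩ := exists_absNorm_under_lt restrict_ne_one hS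
  obtain ⟨Q, rfl⟩ := heightOneSpectrum_under_surjective (𝓞 L) (S := 𝓞 K) QL
  have under_under : (Q.under (𝓞 L)).under (𝓞 F) = Q.under (𝓞 F) :=
    HeightOneSpectrum.ext (Ideal.under_under _)
  rw [under_under] at hQL h_lt
  obtain ⟨φ, hφ⟩ := IsArithFrobAt.exists_of_isInvariant (𝓞 F) Gal(K/F) Q.asIdeal
  refine ⟨Q, hQL, φ, fun hφH => ?_, hφ⟩
  refine h_lt.not_ge (absNorm_le_of_forall_pow_sub_self_mem
    (NumberField.HeightOneSpectrum.one_lt_absNorm _) fun x => ?_)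
  have smul_eq : φ • algebraMap (𝓞 L) (𝓞 K) x = algebraMap (𝓞 L) (𝓞 K) x :=
    RingOfIntegers.ext ((x : L).2 ⟨φ, hφH⟩)
  have frob_mem : φ • algebraMap (𝓞 L) (𝓞 K) x -
      algebraMap (𝓞 L) (𝓞 K) x ^ Nat.card (𝓞 F ⧸ Q.asIdeal.under (𝓞 F)) ∈ Q.asIdeal :=
    hφ (algebraMap (𝓞 L) (𝓞 K) x)
  rw [smul_eq, ← map_pow, ← map_sub] at frob_mem
  rw [← neg_mem_iff, neg_sub, Ideal.absNorm_apply, Submodule.cardQuot_apply]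
  exact frob_mem

end Frobenius

section Kummer

lemma eq_of_pow_eq_pow_of_sub_mem {S : Type*} [CommRing S] [IsDomain S] {Q : Ideal S} [Q.IsPrime]
    {n : ℕ} (hn : (n : S) ∉ Q) {x y : S} (hy : y ∉ Q) (h_pow : x ^ n = y ^ n)
    (h_sub : x - y ∈ Q) : x = y := by
  by_contra h_ne
  have geom_sum_eq_zero : ∑ i ∈ Finset.range n, x ^ i * y ^ (n - 1 - i) = 0 := by
    refine (mul_eq_zero.1 ?_).resolve_right (sub_ne_zero.2 h_ne)
    rw [(Commute.all x y).geom_sum₂_mul, h_pow, sub_self]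
  have mul_pow_mem : (n : S) * y ^ (n - 1) ∈ Q := by
    have mk_eq : Ideal.Quotient.mk Q x = Ideal.Quotient.mk Q y := Ideal.Quotient.eq.2 h_sub
    have := congrArg (Ideal.Quotient.mk Q) geom_sum_eq_zero
    rwa [RingHom.map_geom_sum₂, mk_eq, geom_sum₂_self, ← map_pow,
      ← map_natCast (Ideal.Quotient.mk Q), ← map_mul, map_zero,
      Ideal.Quotient.eq_zero_iff_mem] at this
  exact (‹Q.IsPrime›.mem_or_mem mul_pow_mem).elim hn fun h => hy (‹Q.IsPrime›.mem_of_pow_mem _ h)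

lemma exists_pow_eq_one_and_smul_mul_eq {R S G : Type*} [CommRing R] [CommRing S] [IsDomain S]
    [Algebra R S] [Group G] [MulSemiringAction G S] [SMulCommClass G R S] {φ : G} {Q : Ideal S}
    [Q.IsPrime] (hφ : IsArithFrobAt R φ Q) {n : ℕ} {ζ : S} (hζ : IsPrimitiveRoot ζ n)
    (hn : (n : S) ∉ Q) {a : R} {b : S} (hb : b ^ n = algebraMap R S a) (ha : a ∉ Q.under R)
    {y : R} (hy : y ^ n - a ∈ Q.under R) :
    ∃ ξ, ξ ^ n = 1 ∧ φ • (ξ * b) = ξ * b := by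
  have n_pos : 0 < n := Nat.pos_of_ne_zero (by rintro rfl; simp at hn)
  obtain ⟨ξ, hξ, y_sub_mem⟩ : ∃ ξ, ξ ^ n = 1 ∧ algebraMap R S y - ξ * b ∈ Q := by
    have h_mem : algebraMap R S y ^ n - b ^ n ∈ Q := by
      rwa [hb, ← map_pow, ← map_sub]
    rw [hζ.pow_sub_pow_eq_prod_sub_mul _ _ n_pos, Ideal.IsPrime.prod_mem_iff] at h_mem
    obtain ⟨ξ, hξ, h_mem⟩ := h_mem
    exact ⟨ξ, (Polynomial.mem_nthRootsFinset n_pos _).1 hξ, h_mem⟩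
  have mul_pow_eq : (ξ * b) ^ n = algebraMap R S a := by rw [mul_pow, hξ, one_mul, hb]
  refine ⟨ξ, hξ, eq_of_pow_eq_pow_of_sub_mem hn (Q := Q) (fun h => ha ?_) ?_ ?_⟩
  · rw [Ideal.mem_comap, ← mul_pow_eq]
    exact Ideal.pow_mem_of_mem Q h n n_pos
  · rw [← smul_pow', mul_pow_eq, smul_algebraMap]
  · have : Finite (R ⧸ Q.under R) := hφ.finite_quotient
    have : (Q.under R).IsMaximal :=
      Ideal.Quotient.maximal_of_isField _ (Finite.isField_of_domain _)
    let := Ideal.Quotient.field (Q.under R)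
    have := Fintype.ofFinite (R ⧸ Q.under R)
    have pow_card_sub_mem : algebraMap R S y ^ Nat.card (R ⧸ Q.under R) - algebraMap R S y ∈ Q := by
      rw [← map_pow, ← map_sub, ← Ideal.mem_comap, ← Ideal.under_def,
        ← Ideal.Quotient.eq, map_pow, Nat.card_eq_fintype_card, FiniteField.pow_card]
    have frob_sub_mem : φ • (ξ * b) - (ξ * b) ^ Nat.card (R ⧸ Q.under R) ∈ Q := hφ (ξ * b)
    rw [← Ideal.Quotient.eq] at *
    rw [frob_sub_mem, map_pow, ← y_sub_mem, ← map_pow, pow_card_sub_mem]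

end Kummer

section PowModAlmostAllPrimes

/-- `a` is an `n`-th power modulo all but finitely many of the height-one primes of `R`. For the
ring of integers of a number field this replaces being an `n`-th power in almost all completions;
it only involves residue fields, and it passes to finite extensions. -/
def IsPowModAlmostAllPrimes {R : Type*} [CommRing R] (n : ℕ) (a : R) : Prop :=
  {v : HeightOneSpectrum R | ¬∃ y, y ^ n - a ∈ v.asIdeal}.Finite

lemma IsPowModAlmostAllPrimes.algebraMap_of_isIntegral {R : Type*} (S : Type*) [CommRing R]
    [CommRing S] [IsDedekindDomain R] [IsDedekindDomain S] [Algebra R S] [FaithfulSMul R S]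
    [Algebra.IsIntegral R S] {n : ℕ} {a : R} (h : IsPowModAlmostAllPrimes n a) :
    IsPowModAlmostAllPrimes n (algebraMap R S a) := by
  refine ((tendsto_heightOneSpectrum_under_cofinite R).eventually
    (Filter.eventually_cofinite.2 h)).mono fun w ⟨y, hy⟩ => ⟨algebraMap R S y, ?_⟩
  simpa using Ideal.mem_comap.1 hy

variable {F K : Type*} [Field F] [NumberField F] [Field K] [NumberField K] [Algebra F K]
  [IsGalois F K] {q : ℕ} [NeZero q]

theorem exists_notMem_forall_exists_map_mul_eq {H : Subgroup Gal(K/F)} [H.Normal] (hH : H ≠ ⊤)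
    {ζ : K} (hζ : IsPrimitiveRoot ζ q) {a : 𝓞 F} (ha : a ≠ 0)
    (h_pow : IsPowModAlmostAllPrimes q a) :
    ∃ φ ∉ H, ∀ b : K, b ^ q = algebraMap (𝓞 F) K a → ∃ ξ, ξ ^ q = 1 ∧ φ (ξ * b) = ξ * b := by
  have q_ne_zero : (q : 𝓞 F) ≠ 0 := NeZero.ne _
  obtain ⟨Q, hQ, φ, hφH, hφ⟩ := exists_isArithFrobAt_notMem hH
    (h_pow.union ((finite_setOf_mem_asIdeal q_ne_zero).union (finite_setOf_mem_asIdeal ha)))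
  obtain ⟨⟨y, hy⟩, hqQ, haQ⟩ : (∃ y, y ^ q - a ∈ (Q.under (𝓞 F)).asIdeal) ∧
      (q : 𝓞 F) ∉ (Q.under (𝓞 F)).asIdeal ∧ a ∉ (Q.under (𝓞 F)).asIdeal := by
    simpa only [Set.mem_union, Set.mem_ofPred, not_or, not_not] using hQ
  refine ⟨φ, hφH, fun b hb => ?_⟩
  obtain ⟨β, rfl⟩ : ∃ β : 𝓞 K, algebraMap (𝓞 K) K β = b :=
    ⟨⟨b, .of_pow (NeZero.pos q) (hb ▸ (algebraMap (𝓞 F) (𝓞 K) a).2)⟩, rfl⟩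
  obtain ⟨ξ, hξ, h_fix⟩ := exists_pow_eq_one_and_smul_mul_eq hφ hζ.toInteger_isPrimitiveRoot
    (by simpa using hqQ) (RingOfIntegers.ext hb) haQ hy
  exact ⟨ξ, congrArg (algebraMap (𝓞 K) K) hξ, congrArg (algebraMap (𝓞 K) K) h_fix⟩

theorem exists_pow_eq_of_isPrimitiveRoot {ζ : F} (hζ : IsPrimitiveRoot ζ q) {a : 𝓞 F} (ha : a ≠ 0)
    (h_pow : IsPowModAlmostAllPrimes q a) : ∃ b : F, b ^ q = a := by
  let f : Polynomial F := .X ^ q - .C (a : F)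
  let L := f.SplittingField
  have : IsGalois F L := IsGalois.of_separable_splitting_field
    (Polynomial.separable_X_pow_sub_C _ (NeZero.ne (q : F)) (RingOfIntegers.coe_ne_zero_iff.2 ha))
  have : NumberField L := .of_module_finite F L
  have hζL : IsPrimitiveRoot (algebraMap F L ζ) q := hζ.map_of_injective (algebraMap F L).injective
  have bot_eq_top : (⊥ : Subgroup Gal(L/F)) = ⊤ := by
    by_contra h_ne
    obtain ⟨φ, hφ, h_fix⟩ := exists_notMem_forall_exists_map_mul_eq h_ne hζL ha h_pow
    refine hφ (Subgroup.mem_bot.2 (AlgEquiv.coe_toAlgHom_injective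
      (AlgHom.ext_of_adjoin_eq_top (Polynomial.SplittingField.adjoin_rootSet f) fun c hc => ?_)))
    have c_pow : c ^ q = algebraMap F L a := by
      simpa [f, sub_eq_zero] using (Polynomial.mem_rootSet.1 hc).2
    obtain ⟨ξ, hξ, h_map⟩ := h_fix c c_pow
    obtain ⟨i, -, rfl⟩ := hζL.eq_pow_of_pow_eq_one hξ
    rw [map_mul, ← map_pow, AlgEquiv.commutes] at h_map
    exact mul_left_cancel₀ (by simp [hζ.ne_zero (NeZero.ne q)]) h_map
  obtain ⟨b, hb⟩ := (Polynomial.SplittingField.splits f).exists_eval_eq_zero (by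
    rw [Polynomial.degree_map, Polynomial.degree_X_pow_sub_C (NeZero.pos q)]
    exact_mod_cast NeZero.ne q)
  obtain ⟨c, rfl⟩ := (IsGalois.mem_range_algebraMap_iff_fixed (F := F) b).2 fun σ => by
    have σ_mem : σ ∈ (⊥ : Subgroup Gal(L/F)) := bot_eq_top ▸ Subgroup.mem_top σ
    rw [Subgroup.mem_bot.1 σ_mem, AlgEquiv.one_apply]
  refine ⟨c, (algebraMap F L).injective ?_⟩
  simpa [f, sub_eq_zero] using hb

end PowModAlmostAllPrimes

section CyclicDescent

lemma exists_normal_ne_top_forall_notMem_zpowers_eq_top {G : Type*} [Group G] [Finite G]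
    [IsCyclic G] [Nontrivial G] {p : ℕ} [Fact p.Prime] (hG : IsPGroup p G) :
    ∃ H : Subgroup G, H.Normal ∧ H ≠ ⊤ ∧ ∀ g ∉ H, Subgroup.zpowers g = ⊤ := by
  let _ : CommGroup G := IsCyclic.commGroup
  obtain ⟨n, hn⟩ := IsPGroup.iff_card.1 hG
  have n_pos : n ≠ 0 := by
    rintro rfl
    exact Finite.one_lt_card.ne' (hn.trans (pow_zero p))
  obtain ⟨m, rfl⟩ := Nat.exists_eq_succ_of_ne_zero n_pos
  have zpowers_eq_top_of_notMem : ∀ g ∉ (powMonoidHom (p ^ m) : G →* G).ker,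
      Subgroup.zpowers g = ⊤ := by
    intro g hg
    refine Subgroup.eq_top_of_card_eq _ ?_
    rw [Nat.card_zpowers, hn, orderOf_eq_prime_pow hg (hn ▸ pow_card_eq_one')]
  refine ⟨(powMonoidHom (p ^ m) : G →* G).ker, inferInstance, fun h_top => ?_,
    zpowers_eq_top_of_notMem⟩
  obtain ⟨g, hg⟩ := IsCyclic.exists_ofOrder_eq_natCard (α := G)
  have pow_eq_one : g ^ p ^ m = 1 := (h_top ▸ Subgroup.mem_top g : g ∈ (powMonoidHom _).ker)
  have h_dvd := orderOf_dvd_of_pow_eq_one pow_eq_one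
  rw [hg, hn, Nat.pow_dvd_pow_iff_le_right (Fact.out : p.Prime).one_lt] at h_dvd
  lia

variable {F K : Type*} [Field F] [NumberField F] [Field K] [NumberField K] [Algebra F K]
  [IsGalois F K] {q : ℕ} [NeZero q]

theorem exists_pow_eq_of_isCyclic_of_isPGroup {ζ : K} (hζ : IsPrimitiveRoot ζ q)
    {p : ℕ} [Fact p.Prime] (hG : IsPGroup p Gal(K/F)) [IsCyclic Gal(K/F)] {a : 𝓞 F} (ha : a ≠ 0)
    (h_pow : IsPowModAlmostAllPrimes q a) : ∃ b : F, b ^ q = a := by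
  have haK : algebraMap (𝓞 F) (𝓞 K) a ≠ 0 := by
    rwa [Ne, FaithfulSMul.algebraMap_eq_zero_iff]
  obtain ⟨β, hβ⟩ := exists_pow_eq_of_isPrimitiveRoot hζ haK (h_pow.algebraMap_of_isIntegral (𝓞 K))
  obtain ⟨ξ, hξ, h_fixed⟩ : ∃ ξ, ξ ^ q = 1 ∧ ∀ σ : Gal(K/F), σ (ξ * β) = ξ * β := by
    cases subsingleton_or_nontrivial Gal(K/F) with
    | inl _ => exact ⟨1, one_pow q, fun σ => by rw [Subsingleton.elim σ 1, AlgEquiv.one_apply]⟩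
    | inr _ =>
      obtain ⟨H, _, hH, h_gen⟩ := exists_normal_ne_top_forall_notMem_zpowers_eq_top hG
      obtain ⟨φ, hφ, h_fix⟩ := exists_notMem_forall_exists_map_mul_eq hH hζ ha h_pow
      obtain ⟨ξ, hξ, h_map⟩ := h_fix β hβ
      have zpowers_le : Subgroup.zpowers φ ≤ MulAction.stabilizer Gal(K/F) (ξ * β) :=
        Subgroup.zpowers_le.2 h_map
      exact ⟨ξ, hξ, fun σ => zpowers_le (h_gen φ hφ ▸ Subgroup.mem_top σ)⟩
  obtain ⟨b, hb⟩ := (IsGalois.mem_range_algebraMap_iff_fixed (F := F) (ξ * β)).2 h_fixed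
  refine ⟨b, (algebraMap F K).injective ?_⟩
  rw [map_pow, hb, mul_pow, hξ, one_mul, hβ]
  rfl

end CyclicDescent

section Completion

variable {R : Type*} [CommRing R] [IsDedekindDomain R] (K : Type*) [Field K] [Algebra R K]
  [IsFractionRing R K] (v : HeightOneSpectrum R)

lemma residue_adicCompletionIntegers_algebraMap_eq_zero_iff {r : R} :
    IsLocalRing.residue (v.adicCompletionIntegers K) (algebraMap R _ r) = 0 ↔ r ∈ v.asIdeal := by
  rw [IsLocalRing.residue_eq_zero_iff, ← v.valuation_lt_one_iff_mem (K := K),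
    ← HeightOneSpectrum.valuedAdicCompletion_eq_valuation]
  exact Valuation.mem_maximalIdeal_iff ..

lemma residue_adicCompletionIntegers_algebraMap_surjective :
    Function.Surjective fun r : R =>
      IsLocalRing.residue (v.adicCompletionIntegers K) (algebraMap R _ r) := by
  intro z
  obtain ⟨z, rfl⟩ := IsLocalRing.residue_surjective z
  have isOpen_ball : IsOpen {x : v.adicCompletion K | Valued.v (x - z) < 1} := by
    have := Valued.isOpen_ball (v.adicCompletion K) 1
    simp only [Valuation.restrict_lt_one_iff] at this
    exact this.preimage (by fun_prop : Continuous fun x : v.adicCompletion K => x - z)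
  obtain ⟨x, hx⟩ := (v.denseRange_algebraMap (K := K)).exists_mem_open isOpen_ball ⟨z, by simp⟩
  have x_le : v.valuation K x ≤ 1 := by
    rw [← v.valuedAdicCompletion_eq_valuation', ← sub_add_cancel (x : v.adicCompletion K) z]
    exact (Valuation.map_add _ _ _).trans (max_le (le_of_lt hx) z.2)
  obtain ⟨r, hr⟩ := v.exists_valuation_sub_lt_of_integer x_le 1
  refine ⟨r, ?_⟩
  rw [← sub_eq_zero, ← map_sub, IsLocalRing.residue_eq_zero_iff]
  refine (Valuation.mem_maximalIdeal_iff ..).2 ?_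
  have sub_lt_one : Valued.v (algebraMap K (v.adicCompletion K) (algebraMap R K r) -
      algebraMap K (v.adicCompletion K) x) < 1 := by
    rw [← map_sub]
    exact (v.valuedAdicCompletion_eq_valuation' _).trans_lt hr
  have add_lt_one := Valuation.map_add_lt Valued.v sub_lt_one hx
  rwa [sub_add_sub_cancel] at add_lt_one

variable {K v}

theorem exists_pow_sub_mem_of_pow_eq_algebraMap {n : ℕ} (hn : n ≠ 0) {a : R}
    {y : v.adicCompletion K} (hy : y ^ n = algebraMap R _ a) : ∃ b, b ^ n - a ∈ v.asIdeal := by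
  have y_mem : y ∈ v.adicCompletionIntegers K := by
    have : y ^ n ∈ v.adicCompletionIntegers K := hy ▸ v.coe_mem_adicCompletionIntegers a
    rw [HeightOneSpectrum.mem_adicCompletionIntegers] at this ⊢
    rwa [map_pow, pow_le_one_iff hn] at this
  lift y to v.adicCompletionIntegers K using y_mem
  obtain ⟨b, hb : IsLocalRing.residue _ _ = _⟩ :=
    residue_adicCompletionIntegers_algebraMap_surjective K v (IsLocalRing.residue _ y)
  refine ⟨b, ?_⟩
  rw [← residue_adicCompletionIntegers_algebraMap_eq_zero_iff K, map_sub, map_sub, map_pow,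
    map_pow, hb, ← map_pow, sub_eq_zero]
  congr 1
  exact Subtype.ext hy

theorem isPowModAlmostAllPrimes_of_finite_adicCompletion {n : ℕ} (hn : n ≠ 0) {a : R}
    (h : {v : HeightOneSpectrum R |
      ¬∃ y : v.adicCompletion K, y ^ n = algebraMap R _ a}.Finite) :
    IsPowModAlmostAllPrimes n a :=
  h.subset fun _ hv ⟨_, hy⟩ => hv (exists_pow_sub_mem_of_pow_eq_algebraMap hn hy)

end Completion

lemma IsPowModAlmostAllPrimes.of_dvd {R : Type*} [CommRing R] {m n : ℕ} {a : R}
    (h : IsPowModAlmostAllPrimes n a) (hmn : m ∣ n) : IsPowModAlmostAllPrimes m a := by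
  obtain ⟨d, rfl⟩ := hmn
  exact h.subset fun v hv ⟨y, hy⟩ => hv ⟨y ^ d, by rwa [← pow_mul, mul_comm d]⟩

lemma exists_pow_eq_of_coprime_finrank {k F : Type*} [Field k] [Field F] [Algebra k F]
    {q : ℕ} (h : (Module.finrank k F).Coprime q) {a : k} {b : F} (hb : b ^ q = algebraMap k F a) :
    ∃ c, c ^ q = a := by
  refine (pow_mem_range_pow_of_coprime h a).1 ⟨Algebra.norm k b, ?_⟩
  simp only [← map_pow, hb, Algebra.norm_algebraMap]

section FixedField

open IntermediateField

variable {k M : Type*} [Field k] [NumberField k] [Field M] [NumberField M] [Algebra k M]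
  [IsGalois k M] {q : ℕ} [NeZero q]

theorem exists_fixedField_pow_eq_of_isCyclic {ζ : M} (hζ : IsPrimitiveRoot ζ q) {p : ℕ}
    [Fact p.Prime] {D : Subgroup Gal(M/k)} (hD : IsPGroup p D) [IsCyclic D] {a : 𝓞 k} (ha : a ≠ 0)
    (h_pow : IsPowModAlmostAllPrimes q a) :
    ∃ b : fixedField D, b ^ q = algebraMap k (fixedField D) a := by
  let e := subgroupEquivAlgEquiv D
  have : IsCyclic Gal(M/fixedField D) := isCyclic_of_surjective e e.surjective
  have ha' : algebraMap (𝓞 k) (𝓞 (fixedField D)) a ≠ 0 := by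
    rwa [Ne, FaithfulSMul.algebraMap_eq_zero_iff]
  exact exists_pow_eq_of_isCyclic_of_isPGroup hζ (hD.of_equiv e) ha'
    (h_pow.algebraMap_of_isIntegral _)

theorem exists_pow_prime_pow_eq {p n : ℕ} (hp : p.Prime) (hp2 : p ≠ 2) {a : 𝓞 k} (ha : a ≠ 0)
    (h_pow : IsPowModAlmostAllPrimes (p ^ n) a) : ∃ b : k, b ^ p ^ n = a := by
  have := Fact.mk hp
  let K := CyclotomicField (p ^ n) k
  have : NumberField K := IsCyclotomicExtension.numberField {p ^ n} k K
  have : IsGalois k K := IsCyclotomicExtension.isGalois {p ^ n} k K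
  have hζ := IsCyclotomicExtension.zeta_spec (p ^ n) k K
  have : IsCyclic (ZMod (p ^ n))ˣ := ZMod.isCyclic_units_of_prime_pow p hp hp2 n
  have : IsCyclic Gal(K/k) := isCyclic_of_injective (hζ.autToPow k) (hζ.autToPow_injective k)
  obtain ⟨P⟩ : Nonempty (Sylow p Gal(K/k)) := inferInstance
  obtain ⟨b, hb⟩ := exists_fixedField_pow_eq_of_isCyclic hζ P.isPGroup' ha h_pow
  refine exists_pow_eq_of_coprime_finrank ?_ hb
  rw [finrank_eq_fixingSubgroup_index, fixingSubgroup_fixedField]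
  exact ((hp.coprime_iff_not_dvd.2 P.not_dvd_index).pow_left n).symm

theorem exists_pow_eq_of_odd {m : ℕ} (hm : Odd m) {a : 𝓞 k} (ha : a ≠ 0)
    (h_pow : IsPowModAlmostAllPrimes m a) : ∃ b : k, b ^ m = a := by
  induction m using Nat.recOnPosPrimePosCoprime with
  | zero => simp at hm
  | one => exact ⟨a, pow_one _⟩
  | prime_pow p n hp hn =>
    refine exists_pow_prime_pow_eq hp ?_ ha h_pow
    rintro rfl
    exact absurd ((Nat.odd_pow_iff hn.ne').1 hm) (by decide)
  | coprime s t _ _ hst ihs iht =>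
    obtain ⟨b, hb⟩ := ihs (Nat.odd_mul.1 hm).1 (h_pow.of_dvd (dvd_mul_right s t))
    obtain ⟨c, hc⟩ := iht (Nat.odd_mul.1 hm).2 (h_pow.of_dvd (dvd_mul_left t s))
    obtain ⟨d, rfl, -⟩ := (pow_eq_pow_iff_of_coprime hst).1 (hb.trans hc.symm)
    exact ⟨d, by rw [← hb, ← pow_mul, mul_comm]⟩

end FixedField

section TwoPower

lemma isPGroup_units_zmod_two_pow (r : ℕ) : IsPGroup 2 (ZMod (2 ^ r))ˣ := by
  cases r with
  | zero => exact IsPGroup.of_card (n := 0) (by simp [Nat.card_eq_fintype_card])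
  | succ r =>
    refine IsPGroup.of_card (n := r) ?_
    rw [Nat.card_eq_fintype_card, ZMod.card_units_eq_totient,
      Nat.totient_prime_pow_succ Nat.prime_two, Nat.add_one_sub_one, mul_one]

lemma isCyclic_ker_unitsMap_four {s : ℕ} (h : 4 ∣ 2 ^ (s + 2)) :
    IsCyclic (ZMod.unitsMap h).ker := by
  have card_ker : Nat.card (ZMod.unitsMap h).ker = 2 ^ s := by
    have index_mul_card := (ZMod.unitsMap h).ker.index_mul_card
    rw [Subgroup.index_ker, MonoidHom.range_eq_top.2 (ZMod.unitsMap_surjective h),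
      Subgroup.card_top, Nat.card_eq_fintype_card, ZMod.card_units_eq_totient,
      Nat.card_eq_fintype_card (α := (ZMod (2 ^ (s + 2)))ˣ), ZMod.card_units_eq_totient,
      Nat.totient_prime_pow_succ Nat.prime_two, show Nat.totient 4 = 2 by decide] at index_mul_card
    lia
  have coprime_five : Nat.Coprime 5 (2 ^ (s + 2)) := Nat.Coprime.pow_right _ (by norm_num)
  let five : (ZMod (2 ^ (s + 2)))ˣ := ZMod.unitOfCoprime 5 coprime_five
  have five_mem : five ∈ (ZMod.unitsMap h).ker := by
    rw [MonoidHom.mem_ker, Units.ext_iff, ZMod.unitsMap_val, ZMod.coe_unitOfCoprime,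
      ZMod.cast_natCast h]
    decide
  refine isCyclic_of_orderOf_eq_card (⟨five, five_mem⟩ : (ZMod.unitsMap h).ker) ?_
  rw [Subgroup.orderOf_mk, card_ker, ← orderOf_units, ZMod.coe_unitOfCoprime, ← ZMod.orderOf_five s,
    Nat.cast_ofNat]

lemma exists_val_eq_four_mul_add_three {n : ℕ} [NeZero n] (h : 4 ∣ n) {x : (ZMod n)ˣ}
    (hx : ZMod.unitsMap h x ≠ 1) : ∃ t, (x : ZMod n).val = 4 * t + 3 := by
  have eq_three_of_ne_one : ∀ y : (ZMod 4)ˣ, y ≠ 1 → (y : ZMod 4) = (3 : ℕ) := by decide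
  have val_eq := eq_three_of_ne_one _ hx
  rw [ZMod.unitsMap_val, ← ZMod.natCast_val, ZMod.natCast_eq_natCast_iff'] at val_eq
  exact ⟨(x : ZMod n).val / 4, by lia⟩

lemma notMem_of_ne_top_of_mul_mem_zpowers {G : Type*} [Group G] {u τ : G}
    (hu : ∀ σ ∉ Subgroup.zpowers u, σ * τ ∈ Subgroup.zpowers u) {D : Subgroup G} (hD : D ≠ ⊤)
    (hτ : τ ∈ D) : u ∉ D := by
  refine fun huD => hD ((Subgroup.eq_top_iff' D).2 fun σ => ?_)
  have zpowers_le : Subgroup.zpowers u ≤ D := Subgroup.zpowers_le.2 huD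
  by_cases hσ : σ ∈ Subgroup.zpowers u
  · exact zpowers_le hσ
  · exact (D.mul_mem_cancel_right hτ).1 (zpowers_le (hu σ hσ))

lemma le_zpowers_sq_sup_zpowers {G : Type*} [Group G] (hG : IsPGroup 2 G) {u τ : G}
    (hu : ∀ σ ∉ Subgroup.zpowers u, σ * τ ∈ Subgroup.zpowers u) {D : Subgroup G} (huD : u ∉ D)
    (hτ : τ ∈ D) : D ≤ Subgroup.zpowers (u ^ 2) ⊔ Subgroup.zpowers τ := by
  have mem_zpowers_sq : ∀ σ ∈ D, σ ∈ Subgroup.zpowers u → σ ∈ Subgroup.zpowers (u ^ 2) := by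
    rintro _ hσ ⟨n, rfl⟩
    obtain ⟨j, rfl⟩ | n_odd := Int.even_or_odd n
    · exact ⟨j, by simp only [← two_mul, zpow_mul, zpow_ofNat]⟩
    · refine absurd (Subgroup.zpowers_le.2 hσ (mem_zpowers_zpow_iff.2 ?_)) huD
      obtain ⟨m, hm⟩ := IsPGroup.iff_orderOf.1 hG u
      rw [hm, ← Int.isCoprime_iff_gcd_eq_one]
      push_cast
      exact (Int.isCoprime_two_right.2 n_odd).pow_right
  intro σ hσ
  by_cases hσu : σ ∈ Subgroup.zpowers u
  · exact Subgroup.mem_sup_left (mem_zpowers_sq σ hσ hσu)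
  · rw [← Subgroup.mul_mem_cancel_right _ (Subgroup.mem_sup_right (Subgroup.mem_zpowers τ))]
    exact Subgroup.mem_sup_left (mem_zpowers_sq _ (D.mul_mem hσ hτ) (hu σ hσu))

section Twist

variable {K : Type*} [Field K]

lemma exists_sq_eq_of_map_eq {u : K →+* K} {r : ℕ} {ζ : K} (hζ : IsPrimitiveRoot ζ (2 ^ r))
    (huζ : u ζ ≠ ζ) {ω : K} (hω : ω ^ 2 ^ r = 1) (huω : u ω = ω) :
    ∃ θ, θ ^ 2 ^ r = 1 ∧ θ ^ 2 = ω := by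
  obtain ⟨c, -, rfl⟩ := hζ.eq_pow_of_pow_eq_one hω
  obtain ⟨d, rfl⟩ | c_odd := Nat.even_or_odd c
  · exact ⟨ζ ^ d, by rw [pow_right_comm, hζ.pow_eq_one, one_pow], by rw [← pow_mul, mul_two]⟩
  · obtain ⟨i, -, hi⟩ := (hζ.pow_of_coprime c
      ((Nat.coprime_two_right.2 c_odd).pow_right r)).eq_pow_of_pow_eq_one hζ.pow_eq_one
    exact absurd (by rw [← hi, map_pow, huω]) huζ

lemma exists_map_zpow_mul_sq_eq {τ : K →+* K} {θ : K} (hθ : θ ≠ 0) {h : ℕ}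
    (hh : h.Coprime (orderOf θ)) (hτθ : τ θ = θ ^ (2 * h + 1)) :
    ∃ m : ℤ, τ (θ ^ m) * θ ^ 2 = θ ^ m := by
  obtain ⟨m, hm⟩ := exists_pow_eq_self_of_coprime hh
  refine ⟨-m, ?_⟩
  have pow_eq : (θ ^ (2 * h + 1)) ^ m = θ ^ 2 * θ ^ m := by
    rw [pow_succ, mul_pow, mul_comm 2, pow_mul θ, pow_right_comm, hm]
  rw [zpow_neg, zpow_natCast, map_inv₀, map_pow, hτθ, pow_eq]
  field_simp

theorem exists_pow_two_pow_eq_and_map_eq {k : Type*} [Field k] [Algebra k K] {u τ : K ≃ₐ[k] K}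
    (h_comm : u * τ = τ * u) {r : ℕ} {ζ : K} (hζ : IsPrimitiveRoot ζ (2 ^ r)) (huζ : u ζ ≠ ζ)
    {t : ℕ} (hτζ : τ ζ = ζ ^ (4 * t + 3)) {a : k} (ha : a ≠ 0) {β : K}
    (hβ : β ^ 2 ^ r = algebraMap k K a) (huβ : u β = β) :
    ∃ γ, γ ^ 2 ^ r = algebraMap k K a ∧ τ γ = γ ∧ u (u γ) = γ := by
  have β_ne_zero : β ≠ 0 := by
    rintro rfl
    rw [zero_pow (by positivity), eq_comm, map_eq_zero] at hβ
    exact ha hβ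
  have div_pow_eq_one : (τ β / β) ^ 2 ^ r = 1 := by
    rw [div_pow, ← map_pow, hβ, AlgEquiv.commutes, ← hβ, div_self (pow_ne_zero _ β_ne_zero)]
  have map_div_eq : u (τ β / β) = τ β / β := by
    rw [map_div₀, ← AlgEquiv.mul_apply, h_comm, AlgEquiv.mul_apply, huβ]
  obtain ⟨θ, θ_pow, θ_sq⟩ :=
    exists_sq_eq_of_map_eq (u := (u : K →+* K)) hζ huζ div_pow_eq_one map_div_eq
  have θ_ne_zero : θ ≠ 0 := by
    rintro rfl
    simp at θ_pow
  have map_map_θ : u (u θ) = θ := by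
    have map_sq : u θ ^ 2 = θ ^ 2 := by rw [← map_pow, θ_sq, map_div_eq]
    obtain h | h := sq_eq_sq_iff_eq_or_eq_neg.1 map_sq
    · rw [h, h]
    · rw [h, map_neg, h, neg_neg]
  have τ_θ : τ θ = θ ^ (2 * (2 * t + 1) + 1) := by
    obtain ⟨i, -, rfl⟩ := hζ.eq_pow_of_pow_eq_one θ_pow
    rw [map_pow, hτζ, pow_right_comm]
    congr 1
    ring
  have coprime_orderOf : (2 * t + 1).Coprime (orderOf θ) :=
    ((Nat.coprime_two_right.2 (odd_two_mul_add_one t)).pow_right r).coprime_dvd_right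
      (orderOf_dvd_of_pow_eq_one θ_pow)
  obtain ⟨m, hm⟩ := exists_map_zpow_mul_sq_eq (τ := (τ : K →+* K)) θ_ne_zero coprime_orderOf τ_θ
  refine ⟨θ ^ m * β, ?_, ?_, ?_⟩
  · rw [mul_pow, hβ, ← zpow_natCast, zpow_comm, zpow_natCast, θ_pow, one_zpow, one_mul]
  · rw [map_mul, ← div_mul_cancel₀ (τ β) β_ne_zero, ← θ_sq, ← mul_assoc]
    exact congrArg (· * β) hm
  · rw [map_mul, map_mul, map_zpow₀, map_zpow₀, map_map_θ, huβ, huβ]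

end Twist

lemma isCyclic_ker_comp {G H N : Type*} [Group G] [Group H] [Group N] {χ : G →* H}
    (hχ : Function.Injective χ) (f : H →* N) [IsCyclic f.ker] : IsCyclic (f.comp χ).ker := by
  let χ' : (f.comp χ).ker →* f.ker := (χ.comp (f.comp χ).ker.subtype).codRestrict f.ker (·.2)
  refine isCyclic_of_injective χ' fun σ τ h => Subtype.ext (hχ ?_)
  exact congrArg Subtype.val h

lemma eq_of_map_eq_of_isPrimitiveRoot {k M : Type*} [Field k] [Field M] [Algebra k M] {n : ℕ}
    [NeZero n] [IsCyclotomicExtension {n} k M] {ζ : M} (hζ : IsPrimitiveRoot ζ n)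
    {σ τ : Gal(M/k)} (h : σ ζ = τ ζ) : σ = τ :=
  AlgEquiv.coe_toAlgHom_injective ((hζ.powerBasis k).algHom_ext h)

open IntermediateField

variable {k M : Type*} [Field k] [NumberField k] [Field M] [NumberField M] [Algebra k M]

lemma exists_fixedField_pow_two_pow_eq_of_ne_top {s : ℕ} [IsCyclotomicExtension {2 ^ (s + 2)} k M]
    {a : 𝓞 k} (ha : a ≠ 0) (h_pow : IsPowModAlmostAllPrimes (2 ^ (s + 2)) a)
    {D : Subgroup Gal(M/k)} (hD : D ≠ ⊤) :
    ∃ b : fixedField D, b ^ 2 ^ (s + 2) = algebraMap k (fixedField D) a := by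
  have : IsGalois k M := IsCyclotomicExtension.isGalois {2 ^ (s + 2)} k M
  have hζ := IsCyclotomicExtension.zeta_spec (2 ^ (s + 2)) k M
  set ζ := IsCyclotomicExtension.zeta (2 ^ (s + 2)) k M
  have χ_injective := hζ.autToPow_injective k
  have hG := (isPGroup_units_zmod_two_pow (s + 2)).of_injective _ χ_injective
  have four_dvd : 4 ∣ 2 ^ (s + 2) := ⟨2 ^ s, by ring⟩
  set ψ := (ZMod.unitsMap four_dvd).comp (hζ.autToPow k)
  have := isCyclic_ker_unitsMap_four four_dvd
  have ker_isCyclic : IsCyclic ψ.ker := isCyclic_ker_comp χ_injective _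
  obtain ⟨β, hβ⟩ := exists_fixedField_pow_eq_of_isCyclic hζ (hG.to_subgroup ψ.ker) ha h_pow
  by_cases D_le_ker : D ≤ ψ.ker
  · exact ⟨inclusion (fixedField_antitone D_le_ker) β, by rw [← map_pow, hβ, AlgHom.commutes]⟩
  obtain ⟨τ, hτD, hτ⟩ := SetLike.not_le_iff_exists.1 D_le_ker
  have mul_mem_ker : ∀ σ ∉ ψ.ker, σ * τ ∈ ψ.ker := by
    have mul_eq_one : ∀ x y : (ZMod 4)ˣ, x ≠ 1 → y ≠ 1 → x * y = 1 := by decide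
    exact fun σ hσ => (map_mul ψ σ τ).trans (mul_eq_one _ _ hσ hτ)
  obtain ⟨u, hu⟩ := (Subgroup.isCyclic_iff_exists_zpowers_eq_top _).1 ker_isCyclic
  have u_notMem := notMem_of_ne_top_of_mul_mem_zpowers (hu ▸ mul_mem_ker) hD hτD
  have u_moves_ζ : u ζ ≠ ζ := fun h =>
    u_notMem (eq_of_map_eq_of_isPrimitiveRoot hζ (τ := 1) h ▸ D.one_mem)
  have u_fixes_β : u β = β := β.2 ⟨u, hu ▸ Subgroup.mem_zpowers u⟩
  have u_comm_τ : u * τ = τ * u := χ_injective (by rw [map_mul, map_mul, mul_comm])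
  obtain ⟨t, ht⟩ := exists_val_eq_four_mul_add_three four_dvd hτ
  obtain ⟨γ, hγ, τ_γ, u_γ⟩ := exists_pow_two_pow_eq_and_map_eq u_comm_τ hζ u_moves_ζ
    (by rw [← hζ.autToPow_spec k, ht]) (RingOfIntegers.coe_ne_zero_iff.2 ha)
    (congrArg Subtype.val hβ) u_fixes_β
  have D_le_stabilizer : D ≤ MulAction.stabilizer Gal(M/k) γ :=
    (le_zpowers_sq_sup_zpowers hG (hu ▸ mul_mem_ker) u_notMem hτD).trans
      (sup_le (Subgroup.zpowers_le.2 u_γ) (Subgroup.zpowers_le.2 τ_γ))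
  exact ⟨⟨γ, fun σ => D_le_stabilizer σ.2⟩, Subtype.ext hγ⟩

theorem exists_fixedField_pow_two_pow_eq {r : ℕ} [IsCyclotomicExtension {2 ^ r} k M] {a : 𝓞 k}
    (ha : a ≠ 0) (h_pow : IsPowModAlmostAllPrimes (2 ^ r) a) {D : Subgroup Gal(M/k)}
    (hD : D ≠ ⊤ ∨ IsCyclic D) :
    ∃ b : fixedField D, b ^ 2 ^ r = algebraMap k (fixedField D) a := by
  have : IsGalois k M := IsCyclotomicExtension.isGalois {2 ^ r} k M
  have hζ := IsCyclotomicExtension.zeta_spec (2 ^ r) k M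
  set χ := hζ.autToPow k
  have χ_injective : Function.Injective χ := hζ.autToPow_injective k
  have hG : IsPGroup 2 Gal(M/k) := (isPGroup_units_zmod_two_pow r).of_injective χ χ_injective
  by_cases D_isCyclic : IsCyclic D
  · exact exists_fixedField_pow_eq_of_isCyclic hζ (hG.to_subgroup D) ha h_pow
  have not_isCyclic_units : ¬ IsCyclic (ZMod (2 ^ r))ˣ := fun _ =>
    D_isCyclic (isCyclic_of_injective (χ.comp D.subtype) (χ_injective.comp D.subtype_injective))
  obtain ⟨s, rfl⟩ : ∃ s, r = s + 2 := by
    rw [ZMod.isCyclic_units_two_pow_iff] at not_isCyclic_units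
    exact ⟨r - 2, by lia⟩
  exact exists_fixedField_pow_two_pow_eq_of_ne_top ha h_pow (hD.resolve_right D_isCyclic)

end TwoPower

open IntermediateField in
theorem exists_fixedField_range_algHom {k M E Ω : Type*} [Field k] [Field M] [Algebra k M]
    [Normal k M] [Field E] [Algebra k E] [Field Ω] [IsAlgClosed Ω] [Algebra E Ω] [IsGalois E Ω]
    [Algebra k Ω] [IsScalarTower k E Ω] :
    ∃ (ι : M →ₐ[k] Ω) (φ : Gal(Ω/E) →* Gal(M/k)), (∀ s x, ι (φ s x) = s (ι x)) ∧
      Nonempty (fixedField φ.range →ₐ[k] E) := by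
  let ι : M →ₐ[k] Ω := IsAlgClosed.lift
  let _ : Algebra M Ω := ι.toAlgebra
  have : IsScalarTower k M Ω := .of_algebraMap_eq fun x => (ι.commutes x).symm
  let φ : Gal(Ω/E) →* Gal(M/k) :=
    (AlgEquiv.restrictNormalHom M).comp (AlgEquiv.restrictScalarsHom k)
  have hφ : ∀ s x, ι (φ s x) = s (ι x) := fun s x =>
    AlgEquiv.restrictNormal_commutes (AlgEquiv.restrictScalars k s) M x
  let j : E →ₐ[k] Ω := IsScalarTower.toAlgHom k E Ω
  have mem_range : ∀ x : fixedField φ.range, ι x ∈ j.range := fun x =>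
    (InfiniteGalois.mem_range_algebraMap_iff_fixed (ι x)).2 fun s => by
      rw [← hφ, show φ s x = x from x.2 ⟨_, s, rfl⟩]
  exact ⟨ι, φ, hφ, ⟨(AlgEquiv.ofInjectiveField j).symm.toAlgHom.comp
    ((ι.comp (fixedField φ.range).val).codRestrict j.range mem_range)⟩⟩

section Valuation

open scoped NNReal

lemma exists_valuation_algebraMap_eq_nnnorm (K L : Type*) [NontriviallyNormedField K]
    [CompleteSpace K] [IsUltrametricDist K] [Field L] [Algebra K L] [Algebra.IsAlgebraic K L] :
    ∃ val : Valuation L ℝ≥0, (∀ x, val (algebraMap K L x) = ‖x‖₊) ∧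
      ∀ (s : Gal(L/K)) x, val (s x) = val x := by
  let _ := spectralNorm.normedField K L
  have : IsUltrametricDist L := IsUltrametricDist.isUltrametricDist_of_isNonarchimedean_norm
    isNonarchimedean_spectralNorm
  exact ⟨NormedField.valuation, fun x => NNReal.eq (spectralNorm_extends x),
    fun s x => NNReal.eq (spectralNorm_eq_of_equiv s x).symm⟩

lemma exists_isPrime_forall_mem_iff_lt_one {R L Γ₀ : Type*} [CommRing R] [Field L]
    [LinearOrderedCommGroupWithZero Γ₀] (val : Valuation L Γ₀) (f : R →+* L)
    (hf : ∀ x, val (f x) ≤ 1) : ∃ Q : Ideal R, Q.IsPrime ∧ ∀ x, x ∈ Q ↔ val (f x) < 1 :=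
  ⟨(IsLocalRing.maximalIdeal val.valuationSubring).comap (f.codRestrict val.valuationSubring hf),
    inferInstance, fun _ => val.mem_maximalIdeal_iff⟩

end Valuation

section Decomposition

open MulAction
open scoped Pointwise

lemma stabilizer_ne_top_of_under_eq (A : Type*) {B G : Type*} [CommRing A] [CommRing B]
    [Algebra A B] [Group G] [Finite G] [MulSemiringAction G B] [SMulCommClass G A B]
    [Algebra.IsInvariant A B G] (Q : Ideal B) [Q.IsPrime] {P₁ P₂ : Ideal B} [P₁.IsPrime]
    [P₂.IsPrime] (h₁ : P₁.under A = Q.under A) (h₂ : P₂.under A = Q.under A) (h_ne : P₁ ≠ P₂) :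
    stabilizer G Q ≠ ⊤ := by
  intro h_top
  obtain ⟨σ, rfl⟩ := Algebra.IsInvariant.exists_smul_of_under_eq A B G Q P₁ h₁.symm
  obtain ⟨τ, rfl⟩ := Algebra.IsInvariant.exists_smul_of_under_eq A B G Q P₂ h₂.symm
  have smul_eq (σ : G) : σ • Q = Q := (Subgroup.eq_top_iff' _).1 h_top σ
  exact h_ne ((smul_eq σ).trans (smul_eq τ).symm)

variable {k M : Type*} [Field k] [Field M] [Algebra k M]

lemma isCyclic_stabilizer_of_natCast_notMem {n : ℕ} [NeZero n] [NumberField M]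
    [IsCyclotomicExtension {n} k M] {Q : Ideal (𝓞 M)} [Q.IsPrime] (hQ : Q ≠ ⊥)
    (hn : (n : 𝓞 M) ∉ Q) : IsCyclic (stabilizer Gal(M/k) Q) := by
  have hζ := IsCyclotomicExtension.zeta_spec n k M
  have : Q.IsMaximal := Ideal.IsPrime.isMaximal ‹_› hQ
  have : (Q.under (𝓞 k)).IsMaximal := Ideal.IsMaximal.under (𝓞 k) Q
  let _ := Ideal.Quotient.field Q
  let _ := Ideal.Quotient.field (Q.under (𝓞 k))
  have : Finite (𝓞 M ⧸ Q) := Ideal.finiteQuotientOfFreeOfNeBot Q hQ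
  refine isCyclic_of_injective (Ideal.Quotient.stabilizerHom Q (Q.under (𝓞 k)) Gal(M/k)) ?_
  rw [← MonoidHom.ker_eq_bot_iff, Ideal.Quotient.ker_stabilizerHom, Subgroup.eq_bot_iff_forall]
  intro σ hσ
  have pow_eq_one : hζ.toInteger ^ n = 1 := hζ.toInteger_isPrimitiveRoot.pow_eq_one
  have ζ_notMem : hζ.toInteger ∉ Q := fun h =>
    Ideal.IsPrime.one_notMem ‹_› (pow_eq_one ▸ Q.pow_mem_of_mem h n (NeZero.pos n))
  have smul_eq : σ • hζ.toInteger = hζ.toInteger :=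
    eq_of_pow_eq_pow_of_sub_mem hn ζ_notMem (by rw [← smul_pow', pow_eq_one, smul_one]) (hσ _)
  exact Subtype.ext (eq_of_map_eq_of_isPrimitiveRoot hζ (congrArg Subtype.val smul_eq))

open IntermediateField in
theorem exists_under_eq_fixedField_stabilizer_algHom [NumberField k] [IsGalois k M]
    (v : HeightOneSpectrum (𝓞 k)) :
    ∃ Q : Ideal (𝓞 M), Q.IsPrime ∧ Q.under (𝓞 k) = v.asIdeal ∧
      Nonempty (fixedField (stabilizer Gal(M/k) Q) →ₐ[k] v.adicCompletion k) := by
  let _ : NontriviallyNormedField (v.adicCompletion k) := Valued.toNontriviallyNormedField _ _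
  have : CharZero (v.adicCompletion k) := algebraRat.charZero _
  obtain ⟨ι, φ, hφ, ⟨f⟩⟩ := exists_fixedField_range_algHom (k := k) (M := M)
    (E := v.adicCompletion k) (Ω := AlgebraicClosure (v.adicCompletion k))
  obtain ⟨val, val_algebraMap, val_smul⟩ := exists_valuation_algebraMap_eq_nnnorm
    (v.adicCompletion k) (AlgebraicClosure (v.adicCompletion k))
  have val_le_one (x : 𝓞 M) : val (ι x) ≤ 1 := by
    have : IsIntegral ℤ (ι x) := (RingOfIntegers.isIntegral_coe x).map (ι.restrictScalars ℤ)
    exact (Valuation.integer.integers val).mem_of_integral this.tower_top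
  obtain ⟨Q, hQ, (mem_Q : ∀ x : 𝓞 M, x ∈ Q ↔ val (ι x) < 1)⟩ :=
    exists_isPrime_forall_mem_iff_lt_one val
    ((ι : M →+* _).comp (algebraMap (𝓞 M) M)) val_le_one
  refine ⟨Q, hQ, ?_, ⟨f.comp (inclusion (fixedField_antitone ?_))⟩⟩
  · ext a
    rw [Ideal.mem_under, mem_Q, ← FinitePlace.norm_lt_one_iff_mem k]
    have ι_algebraMap : ι (algebraMap (𝓞 k) (𝓞 M) a) =
        algebraMap (v.adicCompletion k) _ (algebraMap k _ a) := by
      rw [← IsScalarTower.algebraMap_apply, ← ι.commutes]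
      rfl
    rw [ι_algebraMap, val_algebraMap]
    rfl
  · rintro _ ⟨s, rfl⟩
    have mem_iff (x : 𝓞 M) : φ s • x ∈ Q ↔ x ∈ Q := by
      rw [mem_Q, mem_Q, ← val_smul s (ι x), ← hφ]
      rfl
    rw [mem_stabilizer_iff]
    ext x
    rw [Ideal.mem_pointwise_smul_iff_inv_smul_mem, ← mem_iff, smul_inv_smul]

end Decomposition

section LocalPower

open IntermediateField MulAction
open scoped Pointwise

variable {k : Type*} [Field k] [NumberField k] {r : ℕ} {a : 𝓞 k}

theorem exists_adicCompletion_pow_two_pow_eq {M : Type*} [Field M] [NumberField M]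
    [Algebra k M] [IsCyclotomicExtension {2 ^ r} k M] (ha : a ≠ 0)
    (h_pow : IsPowModAlmostAllPrimes (2 ^ r) a) (v : HeightOneSpectrum (𝓞 k))
    (hv : (2 : 𝓞 k) ∈ v.asIdeal → ∃ w₁ w₂ : HeightOneSpectrum (𝓞 M), w₁ ≠ w₂ ∧
      w₁.asIdeal.under (𝓞 k) = v.asIdeal ∧ w₂.asIdeal.under (𝓞 k) = v.asIdeal) :
    ∃ y : v.adicCompletion k, y ^ 2 ^ r = algebraMap k _ (a : k) := by
  have : IsGalois k M := IsCyclotomicExtension.isGalois {2 ^ r} k M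
  obtain ⟨Q, hQ, Q_under, ⟨f⟩⟩ := exists_under_eq_fixedField_stabilizer_algHom (M := M) v
  suffices hD : stabilizer Gal(M/k) Q ≠ ⊤ ∨ IsCyclic (stabilizer Gal(M/k) Q) by
    obtain ⟨b, hb⟩ := exists_fixedField_pow_two_pow_eq ha h_pow hD
    exact ⟨f b, by rw [← map_pow, hb, f.commutes]⟩
  by_cases two_mem : (2 : 𝓞 k) ∈ v.asIdeal
  · obtain ⟨w₁, w₂, h_ne, h₁, h₂⟩ := hv two_mem
    exact .inl (stabilizer_ne_top_of_under_eq (𝓞 k) Q (h₁.trans Q_under.symm)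
      (h₂.trans Q_under.symm) fun h => h_ne (HeightOneSpectrum.ext h))
  · have Q_ne_bot : Q ≠ ⊥ := by
      rintro rfl
      exact v.ne_bot (Q_under.symm.trans (Ideal.under_bot _ _))
    refine .inr (isCyclic_stabilizer_of_natCast_notMem (n := 2 ^ r) Q_ne_bot fun h => two_mem ?_)
    rw [← Q_under, Ideal.mem_under, map_ofNat]
    rw [Nat.cast_pow] at h
    exact hQ.mem_of_pow_mem _ h

theorem exists_real_pow_two_pow_eq (ha : a ≠ 0)
    (h_pow : IsPowModAlmostAllPrimes (2 ^ r) a) (σ : k →+* ℝ) : ∃ y : ℝ, y ^ 2 ^ r = σ a := by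
  let M := CyclotomicField (2 ^ r) k
  have : NumberField M := IsCyclotomicExtension.numberField {2 ^ r} k M
  have : IsGalois k M := IsCyclotomicExtension.isGalois {2 ^ r} k M
  let _ : Algebra k ℝ := σ.toAlgebra
  let _ : Algebra k ℂ := ((algebraMap ℝ ℂ).comp σ).toAlgebra
  have : IsScalarTower k ℝ ℂ := .of_algebraMap_eq fun _ => rfl
  have : Algebra.IsQuadraticExtension ℝ ℂ := ⟨Complex.finrank_real_complex⟩
  have : IsGalois ℝ ℂ := { }
  obtain ⟨-, φ, -, ⟨f⟩⟩ :=
    exists_fixedField_range_algHom (k := k) (M := M) (E := ℝ) (Ω := ℂ)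
  have range_isCyclic : IsCyclic φ.range :=
    isCyclic_of_surjective φ.rangeRestrict φ.rangeRestrict_surjective
  obtain ⟨b, hb⟩ := exists_fixedField_pow_two_pow_eq ha h_pow (.inr range_isCyclic)
  exact ⟨f b, by rw [← map_pow, hb]; exact f.commutes _⟩

theorem exists_completion_pow_two_pow_eq (ha : a ≠ 0)
    (h_pow : IsPowModAlmostAllPrimes (2 ^ r) a) (w : InfinitePlace k) :
    ∃ y : w.Completion, y ^ 2 ^ r = algebraMap k _ (a : k) := by
  obtain hw | hw := w.isReal_or_isComplex
  · let f := InfinitePlace.Completion.ringEquivRealOfIsReal hw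
    obtain ⟨y, hy⟩ := exists_real_pow_two_pow_eq ha h_pow
      ((f : w.Completion →+* ℝ).comp (algebraMap k w.Completion))
    exact ⟨f.symm y, by rw [← map_pow, hy]; exact f.symm_apply_apply _⟩
  · let f := InfinitePlace.Completion.ringEquivComplexOfIsComplex hw
    obtain ⟨y, hy⟩ := IsAlgClosed.exists_pow_nat_eq (f (algebraMap k w.Completion a))
      (n := 2 ^ r) (by positivity)
    exact ⟨f.symm y, by rw [← map_pow, hy, f.symm_apply_apply]⟩

end LocalPower

lemma exists_pow_eq_algebraMap_iff_of_eq_mul_pow {k E : Type*} [Field k] [Field E] [Algebra k E]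
    {n : ℕ} {a c d : k} (hd : d ≠ 0) (hc : c = a * d ^ n) :
    (∃ y : E, y ^ n = algebraMap k E c) ↔ ∃ y : E, y ^ n = algebraMap k E a := by
  have hd' : algebraMap k E d ≠ 0 := (map_ne_zero _).2 hd
  rw [hc, map_mul, map_pow]
  refine ⟨fun ⟨y, hy⟩ => ⟨y / algebraMap k E d, ?_⟩,
    fun ⟨y, hy⟩ => ⟨y * algebraMap k E d, by rw [mul_pow, hy]⟩⟩
  rw [div_pow, hy, mul_div_cancel_right₀ _ (pow_ne_zero n hd')]

lemma exists_algebraMap_eq_mul_pow (R : Type*) {K : Type*} [CommRing R] [IsDomain R] [Field K]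
    [Algebra R K] [IsFractionRing R K] {n : ℕ} (hn : n ≠ 0) (a : K) :
    ∃ (c : R) (d : K), d ≠ 0 ∧ algebraMap R K c = a * d ^ n := by
  obtain ⟨x, d, hd, rfl⟩ := IsFractionRing.div_surjective (A := R) a
  have d_ne_zero : algebraMap R K d ≠ 0 := IsFractionRing.to_map_ne_zero_of_mem_nonZeroDivisors hd
  refine ⟨x * d ^ (n - 1), algebraMap R K d, d_ne_zero, ?_⟩
  rw [map_mul, map_pow, div_mul_eq_mul_div, eq_div_iff d_ne_zero, mul_assoc, pow_sub_one_mul hn]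

theorem exists_pow_two_pow_mul_eq {k E : Type*} [Field k] [NumberField k] [Field E] [Algebra k E]
    {r m : ℕ} (hm : Odd m) {a : 𝓞 k} (ha : a ≠ 0) (h_pow : IsPowModAlmostAllPrimes m a)
    (h : ∃ y : E, y ^ 2 ^ r = algebraMap k E a) :
    ∃ y : E, y ^ (2 ^ r * m) = algebraMap k E a := by
  obtain ⟨y, hy⟩ := h
  obtain ⟨b, hb⟩ := exists_pow_eq_of_odd hm ha h_pow
  have coprime : (2 ^ r).Coprime m := (Nat.coprime_two_left.2 hm).pow_left r
  have pow_eq : y ^ 2 ^ r = algebraMap k E b ^ m := by rw [hy, ← map_pow, hb]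
  obtain ⟨z, rfl, -⟩ := (pow_eq_pow_iff_of_coprime coprime).1 pow_eq
  exact ⟨z, by rw [← hy, ← pow_mul, mul_comm]⟩

theorem stmt_10_general (k : Type*) [Field k] [NumberField k]
    (e r : ℕ) (hr : 2 ^ r ∣ e) (hr' : ¬ 2 ^ (r + 1) ∣ e)
    (M : Type*) [Field M] [Algebra k M] [NumberField M]
    [IsCyclotomicExtension {(2 : ℕ) ^ r} k M] (a : k)
    (h_fin : {v : HeightOneSpectrum (𝓞 k) |
        ¬ ∃ y : v.adicCompletion k, y ^ e = algebraMap k (v.adicCompletion k) a}.Finite) :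
    (∀ v : HeightOneSpectrum (𝓞 k),
        ¬ ((2 : 𝓞 k) ∈ v.asIdeal ∧
            ¬ ∃ w₁ w₂ : HeightOneSpectrum (𝓞 M), w₁ ≠ w₂ ∧
                w₁.asIdeal.comap (algebraMap (𝓞 k) (𝓞 M)) = v.asIdeal ∧
                w₂.asIdeal.comap (algebraMap (𝓞 k) (𝓞 M)) = v.asIdeal) →
        ∃ y : v.adicCompletion k, y ^ e = algebraMap k (v.adicCompletion k) a) ∧
    (∀ w : InfinitePlace k, ∃ y : w.Completion, y ^ e = algebraMap k w.Completion a) := by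
  have he : e ≠ 0 := by
    rintro rfl
    exact hr' (dvd_zero _)
  obtain rfl | ha := eq_or_ne a 0
  · exact ⟨fun _ _ => ⟨0, by rw [zero_pow he, map_zero]⟩,
      fun _ => ⟨0, by rw [zero_pow he, map_zero]⟩⟩
  obtain ⟨c, d, hd, hc⟩ := exists_algebraMap_eq_mul_pow (𝓞 k) he a
  have hc' : c ≠ 0 := by
    rintro rfl
    simp [ha, hd, eq_comm] at hc
  have h_pow : IsPowModAlmostAllPrimes e c :=
    isPowModAlmostAllPrimes_of_finite_adicCompletion (K := k) he <| h_fin.subset fun v hv hy =>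
      hv ((exists_pow_eq_algebraMap_iff_of_eq_mul_pow hd hc).2 hy)
  obtain ⟨m, rfl⟩ := hr
  have hm : Odd m := by
    rwa [pow_succ, Nat.mul_dvd_mul_iff_left (by positivity), ← even_iff_two_dvd,
      Nat.not_even_iff_odd] at hr'
  have h_two := h_pow.of_dvd (dvd_mul_right _ m)
  have h_odd := h_pow.of_dvd (dvd_mul_left m _)
  refine ⟨fun v hv => ?_, fun w => ?_⟩ <;>
    refine (exists_pow_eq_algebraMap_iff_of_eq_mul_pow hd hc).1
      (exists_pow_two_pow_mul_eq hm hc' h_odd ?_)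
  · exact exists_adicCompletion_pow_two_pow_eq (M := M) hc' h_two v fun h => by_contra fun h_not =>
      hv ⟨h, h_not⟩
  · exact exists_completion_pow_two_pow_eq hc' h_two w

/-- Let `k` be a number field, `e ∈ ℕ`, and `2^r` the largest power of `2`
dividing `e`. Let `ε ∈ 𝒪_k^×` be a unit which is an `e`-th power in the completion `k_v` for
all but finitely many places `v` of `k`. Then `ε` is an `e`-th power in `k_v` for every place
`v` of `k` outside the set of finite places lying above `2` that do not split in
`k(μ_{2^r})/k`; in particular at every infinite place. Here `M` is the cyclotomic extension
`k(μ_{2^r})` of `k`, and a place `v` splits in `M/k` if there are at least two distinct places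
of `M` above `v`. -/
theorem stmt_10 (k : Type*) [Field k] [NumberField k]
    (e r : ℕ) (hr : 2 ^ r ∣ e) (hr' : ¬ 2 ^ (r + 1) ∣ e)
    (M : Type*) [Field M] [Algebra k M] [NumberField M]
    [IsCyclotomicExtension {(2 : ℕ) ^ r} k M]
    (ε : (𝓞 k)ˣ)
    (hε : {v : HeightOneSpectrum (𝓞 k) |
        ¬ ∃ y : v.adicCompletion k,
            y ^ e = algebraMap k (v.adicCompletion k) (algebraMap (𝓞 k) k (ε : 𝓞 k))}.Finite) :
    (∀ v : HeightOneSpectrum (𝓞 k),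
        ¬ ((2 : 𝓞 k) ∈ v.asIdeal ∧
            ¬ ∃ w₁ w₂ : HeightOneSpectrum (𝓞 M), w₁ ≠ w₂ ∧
                w₁.asIdeal.comap (algebraMap (𝓞 k) (𝓞 M)) = v.asIdeal ∧
                w₂.asIdeal.comap (algebraMap (𝓞 k) (𝓞 M)) = v.asIdeal) →
        ∃ y : v.adicCompletion k,
          y ^ e = algebraMap k (v.adicCompletion k) (algebraMap (𝓞 k) k (ε : 𝓞 k))) ∧
    (∀ w : InfinitePlace k, ∃ y : w.Completion,
        y ^ e = algebraMap k w.Completion (algebraMap (𝓞 k) k (ε : 𝓞 k))) := by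
  exact stmt_10_general k e r hr hr' M _ hε
end

section
/- For every odd prime p, 16 is an 8th power in the field ℚ_p of p-adic numbers; however, 16 is not an 8th power in ℚ. -/
/-! Over any commutative ring
`y ^ 8 - 16 = (y ^ 2 - 2) * (y ^ 2 + 2) * ((y + 1) ^ 2 + 1) * ((y - 1) ^ 2 + 1)`,
so in an integral domain `16` is an 8th power exactly when one of `2`, `-2`, `-1` is a square.
None of them is a square in `ℚ`. In a finite field a product of two nonsquares is a square, so
`2`, `-1` and `-2 = 2 * (-1)` cannot all be nonsquares; when `2` is a unit, Hensel's lemma lifts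
a square root of whichever is a square to a Henselian local ring such as `ℤ_[p]`. -/

open Polynomial IsLocalRing

theorem exists_pow_eight_eq_sixteen_of_isSquare {R : Type*} [CommRing R]
    (h : IsSquare (2 : R) ∨ IsSquare (-2 : R) ∨ IsSquare (-1 : R)) : ∃ y : R, y ^ 8 = 16 := by
  rcases h with ⟨y, hy⟩ | ⟨y, hy⟩ | ⟨i, hi⟩
  · exact ⟨y, by linear_combination (-y ^ 6 - 2 * y ^ 4 - 4 * y ^ 2 - 8) * hy⟩
  · exact ⟨y, by linear_combination (-y ^ 6 + 2 * y ^ 4 - 4 * y ^ 2 + 8) * hy⟩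
  · have one_add_i_sq : (1 + i) ^ 2 = 2 * i := by linear_combination -hi
    refine ⟨1 + i, ?_⟩
    calc (1 + i) ^ 8 = ((1 + i) ^ 2) ^ 4 := by ring
      _ = 16 * (i * i) ^ 2 := by rw [one_add_i_sq]; ring
      _ = 16 := by rw [← hi]; ring

theorem isSquare_of_pow_eight_eq_sixteen {R : Type*} [CommRing R] [NoZeroDivisors R] {y : R}
    (hy : y ^ 8 = 16) : IsSquare (2 : R) ∨ IsSquare (-2 : R) ∨ IsSquare (-1 : R) := by
  have factored :
      (2 - y * y) * ((-2 - y * y) * ((-1 - (y + 1) * (y + 1)) * (-1 - (y - 1) * (y - 1)))) = 0 := by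
    linear_combination hy
  simp only [mul_eq_zero, sub_eq_zero] at factored
  rcases factored with h | h | h | h
  · exact .inl ⟨_, h⟩
  · exact .inr (.inl ⟨_, h⟩)
  · exact .inr (.inr ⟨_, h⟩)
  · exact .inr (.inr ⟨_, h⟩)

theorem isSquare_mul_of_not_isSquare {F : Type*} [Field F] [Finite F] {a b : F}
    (ha : ¬IsSquare a) (hb : ¬IsSquare b) : IsSquare (a * b) := by
  classical
  have := Fintype.ofFinite F
  have a_ne_zero : a ≠ 0 := fun h ↦ ha (h ▸ IsSquare.zero)
  have b_ne_zero : b ≠ 0 := fun h ↦ hb (h ▸ IsSquare.zero)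
  rw [← quadraticChar_one_iff_isSquare (mul_ne_zero a_ne_zero b_ne_zero), map_mul,
    quadraticChar_neg_one_iff_not_isSquare.2 ha,
    quadraticChar_neg_one_iff_not_isSquare.2 hb]
  norm_num

theorem isSquare_two_or_neg_two_or_neg_one (F : Type*) [Field F] [Finite F] :
    IsSquare (2 : F) ∨ IsSquare (-2 : F) ∨ IsSquare (-1 : F) := by
  by_contra! ⟨two, neg_two, neg_one⟩
  exact neg_two (by simpa using isSquare_mul_of_not_isSquare two neg_one)

theorem isSquare_iff_isSquare_residue {R : Type*} [CommRing R] [HenselianLocalRing R]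
    (two : IsUnit (2 : R)) {u : R} (hu : IsUnit u) :
    IsSquare u ↔ IsSquare (residue R u) := by
  refine ⟨fun h ↦ h.map (residue R), fun ⟨b, hb⟩ ↦ ?_⟩
  obtain ⟨a, rfl⟩ := residue_surjective b
  have approx_root : a ^ 2 - u ∈ maximalIdeal R := by
    rw [← residue_eq_zero_iff, map_sub, map_pow, hb]
    ring
  have ha : IsUnit a := by
    rw [← residue_ne_zero_iff_isUnit] at hu ⊢
    exact left_ne_zero_of_mul (hb ▸ hu)
  obtain ⟨z, hz, -⟩ := HenselianLocalRing.is_henselian (X ^ 2 - C u)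
    (monic_X_pow_sub_C u two_ne_zero) a (by simpa using approx_root)
    (by simpa [one_add_one_eq_two] using two.mul ha)
  have z_sq : z ^ 2 - u = 0 := by simpa using hz
  exact ⟨z, by linear_combination -z_sq⟩

theorem henselianLocalRing_of_henselianRing (R : Type*) [CommRing R] [IsLocalRing R]
    [HenselianRing R (maximalIdeal R)] : HenselianLocalRing R where
  is_henselian f hf a₀ h₀ h₁ := HenselianRing.is_henselian f hf a₀ h₀ (h₁.map _)

section Padic

variable {p : ℕ} [Fact p.Prime]

instance henselianLocalRing_padicInt : HenselianLocalRing ℤ_[p] :=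
  henselianLocalRing_of_henselianRing _

instance finite_residueField_padicInt_s14 : Finite (ResidueField ℤ_[p]) :=
  .of_equiv _ PadicInt.residueField.symm.toEquiv

theorem isUnit_natCast_padicInt {n : ℕ} : IsUnit (n : ℤ_[p]) ↔ p.Coprime n :=
  PadicInt.isUnit_iff.trans PadicInt.norm_natCast_eq_one_iff

end Padic

theorem stmt_14_general :
    (∀ (R : Type*) [CommRing R] [HenselianLocalRing R] [Finite (ResidueField R)],
      IsUnit (2 : R) → ∃ y : R, y ^ 8 = 16) ∧
    ¬ ∃ y : ℚ, y ^ 8 = 16 := by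
  constructor
  · intro R _ _ _ two
    apply exists_pow_eight_eq_sixteen_of_isSquare
    rw [isSquare_iff_isSquare_residue two two, isSquare_iff_isSquare_residue two two.neg,
      isSquare_iff_isSquare_residue two isUnit_one.neg]
    simpa only [map_neg, map_ofNat, map_one] using
      isSquare_two_or_neg_two_or_neg_one (ResidueField R)
  · rintro ⟨y, hy⟩
    rcases isSquare_of_pow_eight_eq_sixteen hy with h | h | h <;> norm_num at h

/-- For every odd prime `p`, `16` is an 8th power in the field `ℚ_p` of
`p`-adic numbers; however, `16` is not an 8th power in `ℚ`. -/
theorem stmt_14 :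
    (∀ (p : ℕ) [Fact p.Prime], p ≠ 2 → ∃ y : ℚ_[p], y ^ 8 = 16) ∧
    ¬ ∃ y : ℚ, y ^ 8 = 16 := by
  refine ⟨fun p _ hp ↦ ?_, stmt_14_general.{0}.2⟩
  have coprime_two : p.Coprime 2 := (Nat.coprime_primes Fact.out Nat.prime_two).2 hp
  have two : IsUnit (2 : ℤ_[p]) := mod_cast isUnit_natCast_padicInt.2 coprime_two
  obtain ⟨y, hy⟩ := stmt_14_general.1 ℤ_[p] two
  exact ⟨y, by exact_mod_cast congrArg ((↑) : ℤ_[p] → ℚ_[p]) hy⟩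
end
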